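/- Let 𝒲 be a Banach space with a Schauder basis. Then either 𝒲 has a minimal infinite-dimensional closed subspace, or there exist a block subspace 𝒳 = [x_n] ⊆ 𝒲 and a countable ordinal α such that 𝒳 = [x_n] is both α-minimal and ω·α-tight. -/

import Mathlib

open Filter Topology

namespace Rosendal

variable {𝒲 : Type} [NormedAddCommGroup 𝒲] [NormedSpace ℝ 𝒲]

/-- `(e n)` is a Schauder basis of the Banach space `𝒲`: every vector has a unique
representation as a norm-convergent series `∑ a n • e n`. -/
def IsSchauderBasis (e : ℕ → 𝒲) : Prop :=
  ∀ x : 𝒲, ∃! a : ℕ → ℝ,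
    Tendsto (fun N => ∑ i ∈ Finset.range N, a i • e i) atTop (𝓝 x)

/-- `x` is a linear combination of the vectors `b i`, `i ∈ s`. -/
def SuppIn (b : ℕ → 𝒲) (x : 𝒲) (s : Finset ℕ) : Prop :=
  ∃ a : ℕ → ℝ, x = ∑ i ∈ s, a i • b i

/-- `(y n)` is a block sequence with respect to the basic sequence `(b n)`: a sequence of
nonzero finite linear combinations of the `b i` with successive supports. -/
def IsBlockSeq (b : ℕ → 𝒲) (y : ℕ → 𝒲) : Prop :=
  (∀ n, y n ≠ 0) ∧
  ∃ D : ℕ → Finset ℕ, (∀ n, SuppIn b (y n) (D n)) ∧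
    ∀ n, ∀ i ∈ D n, ∀ j ∈ D (n + 1), i < j

/-- The closed linear span of a set. -/
noncomputable def closedSpan (S : Set 𝒲) : Submodule ℝ 𝒲 :=
  (Submodule.span ℝ S).topologicalClosure

/-- `(x i)_{i<k} ∼_K (y i)_{i<k}`:
`(1/K)‖∑ a i • x i‖ ≤ ‖∑ a i • y i‖ ≤ K‖∑ a i • x i‖` for all scalars. -/
def SeqEquiv (K : ℝ) (k : ℕ) (x y : ℕ → 𝒲) : Prop :=
  ∀ a : ℕ → ℝ,
    (1 / K) * ‖∑ i ∈ Finset.range k, a i • x i‖ ≤ ‖∑ i ∈ Finset.range k, a i • y i‖ ∧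
    ‖∑ i ∈ Finset.range k, a i • y i‖ ≤ K * ‖∑ i ∈ Finset.range k, a i • x i‖

/-- The tree `T((x n), Y, K)` of finite sequences `(y 0, …, y k)` of vectors of `Y` that are
`K`-equivalent to `(x 0, …, x k)`, ordered by end-extension. -/
def embTree (x : ℕ → 𝒲) (Y : Set 𝒲) (K : ℝ) : Set (List 𝒲) :=
  {l | (∀ v ∈ l, v ∈ Y) ∧ SeqEquiv K l.length (fun i => l.getD i 0) x}

open Classical in
/-- The rank of a tree of finite sequences: if the proper end-extension relation is
well-founded (equivalently, for trees, there is no infinite branch), this is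
`sup { ρ(s) + 1 : s ∈ T }` where `ρ` is the usual rank function; otherwise it is `∞ = ⊤`. -/
noncomputable def treeRank (T : Set (List 𝒲)) : WithTop Ordinal :=
  if h : WellFounded (fun t s : T => s.val <+: t.val ∧ s.val ≠ t.val) then
    ((⨆ s : T, Order.succ ((h.apply s).rank) : Ordinal) : WithTop Ordinal)
  else ⊤

open Classical in
/-- The embeddability index `Emb((x n), Y) = sup_{K ≥ 1} rank T((x n), Y, K)`. -/
noncomputable def embIndex (x : ℕ → 𝒲) (Y : Set 𝒲) : WithTop Ordinal :=
  if ∃ K : ℝ, 1 ≤ K ∧ treeRank (embTree x Y K) = ⊤ then ⊤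
  else ((sSup {o : Ordinal | ∃ K : ℝ, 1 ≤ K ∧
      (o : WithTop Ordinal) = treeRank (embTree x Y K)} : Ordinal) : WithTop Ordinal)

/-- `(I m)` is a sequence of successive nonempty finite intervals `I 0 < I 1 < …` of `ℕ`. -/
def IntervalSeq (I : ℕ → Finset ℕ) : Prop :=
  (∀ m, ∃ a b : ℕ, a ≤ b ∧ I m = Finset.Icc a b) ∧
  ∀ m, ∀ i ∈ I m, ∀ j ∈ I (m + 1), i < j

/-- The closed subspace `[b n : n ∉ ⋃_{m ∈ A} I m]`. -/
noncomputable def residualSpace (b : ℕ → 𝒲) (I : ℕ → Finset ℕ) (A : Set ℕ) :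
    Submodule ℝ 𝒲 :=
  closedSpan {v | ∃ n : ℕ, (∀ m ∈ A, n ∉ I m) ∧ v = b n}

/-- The space `[b n]` with its basis `(b n)` is `α`-tight. -/
def IsAlphaTight (b : ℕ → 𝒲) (α : Ordinal) : Prop :=
  ∀ y : ℕ → 𝒲, IsBlockSeq b y →
    ∃ I : ℕ → Finset ℕ, IntervalSeq I ∧
      ∀ A : Set ℕ, A.Infinite →
        embIndex y (residualSpace b I A : Set 𝒲) ≤ (α : WithTop Ordinal)

/-- The space `[b n]` with its basis `(b n)` is `α`-minimal: every block subspace `[z n]`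
`α`-embeds into every infinite-dimensional subspace `Y ⊆ [b n]`. -/
def IsAlphaMinimal (b : ℕ → 𝒲) (α : Ordinal) : Prop :=
  ∀ z : ℕ → 𝒲, IsBlockSeq b z →
    ∀ Y : Submodule ℝ 𝒲, (Y : Set 𝒲) ⊆ (closedSpan (Set.range b) : Set 𝒲) →
      ¬FiniteDimensional ℝ Y →
        (α : WithTop Ordinal) ≤ embIndex z (Y : Set 𝒲)

/-- `X` embeds isomorphically into `Y` (as an isomorphism onto its image). -/
def LinIsoEmbeds (X Y : Submodule ℝ 𝒲) : Prop :=
  ∃ T : X →ₗ[ℝ] 𝒲, (∀ v : X, T v ∈ Y) ∧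
    ∃ c C : ℝ, 0 < c ∧ ∀ v : X, c * ‖v‖ ≤ ‖T v‖ ∧ ‖T v‖ ≤ C * ‖v‖

/-- `X` is a minimal space: it embeds isomorphically into every infinite-dimensional
closed subspace of itself. -/
def IsMinimalSpace (X : Submodule ℝ 𝒲) : Prop :=
  ∀ Y : Submodule ℝ 𝒲, Y ≤ X → IsClosed (Y : Set 𝒲) → ¬FiniteDimensional ℝ Y →
    LinIsoEmbeds X Y

/-- `F` embeds into `Y` with constant `K`. -/
def KEmbeds (K : ℝ) (F Y : Submodule ℝ 𝒲) : Prop :=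
  ∃ T : F →ₗ[ℝ] 𝒲, (∀ v : F, T v ∈ Y) ∧
    ∀ v : F, (1 / K) * ‖v‖ ≤ ‖T v‖ ∧ ‖T v‖ ≤ K * ‖v‖

end Rosendal

/-!
Embeddings of block spaces are studied through finite partial embeddings between rational spans,
which live in a countable space. Consider the game in which the first player asks for finitely many
vectors to be embedded, and moves the target to a tail of the current block sequence, while the
second player extends the partial embedding with a bounded distortion. A clock `ξ`, an ordinal that
the first player has to decrease in each round, limits the length of the game.

If on a block sequence `x` the second player wins for all countable clocks, then a generic filter
of finite conditions glues the winning strategies into one for the game without a clock. If this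
happens on all block sequences, stabilising them by diagonalisation removes the dependence on the
tails and yields a minimal subspace. Otherwise, let `α` be the least clock for which the second
player loses, after passing to a block sequence. Winning with each clock `γ < α` gives
`α`-minimality. For tightness, a sequence of cuts `a 0 < a 1 < …` is chosen such that the
winning moves of the first player stay valid in the tail from `a (j + 1)` on. If `[y n]` embeds into
a space which omits infinitely many intervals `[a j, a (j + 1))`, then the answers read off its tree
are legal. Each of them lowers the clock by at least one and the rank by less than `ω`, so the rank
is at most `ω * α`.
-/

namespace Rosendal

/-! ### Block sequences over a ring -/

section Blocks

variable {R M : Type*} [Ring R] [AddCommGroup M] [Module R M] {x y z : ℕ → M} {m n : ℕ}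

variable (R) in
/-- Block sequences of `x` with scalars in `R`. Supports are recorded as consecutive intervals of
indices, so that the relation is transitive; over `ℝ` this is `IsBlockSeq`, and over `ℚ` it is the
countable approximation to it in which the games are played. -/
def BlockOf (x y : ℕ → M) : Prop :=
  (∀ n, y n ≠ 0) ∧ ∃ N : ℕ → ℕ, StrictMono N ∧
    ∀ n, y n ∈ Submodule.span R (x '' Set.Ico (N n) (N (n + 1)))

variable (R) in
/-- Some tail of `y` is a block sequence of `x`: the order `⊆*` on block subspaces. -/
def EventuallyBlockOf (x y : ℕ → M) : Prop := ∃ m, BlockOf R x fun n => y (n + m)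

variable (R) in
/-- The span of the tail of `x` starting at the index `n`. -/
def tailSpan (x : ℕ → M) (n : ℕ) : Submodule R M := Submodule.span R (x '' Set.Ici n)

lemma tailSpan_antitone (x : ℕ → M) : Antitone (tailSpan R x) := fun _ _ h =>
  Submodule.span_mono (Set.image_mono (Set.Ici_subset_Ici.2 h))

lemma mem_tailSpan (x : ℕ → M) (h : m ≤ n) : x n ∈ tailSpan R x m :=
  Submodule.subset_span ⟨n, h, rfl⟩

lemma tailSpan_zero (x : ℕ → M) : tailSpan R x 0 = Submodule.span R (Set.range x) := by
  simp [tailSpan, Set.Ici, Set.image_univ]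

lemma tailSpan_shift (x : ℕ → M) (m n : ℕ) :
    tailSpan R (fun i => x (i + m)) n = tailSpan R x (n + m) := by
  rw [tailSpan, tailSpan, ← Set.image_add_const_Ici, Set.image_image]

lemma span_image_Ico_le {N : ℕ → ℕ} (hN : Monotone N)
    (h : ∀ n, y n ∈ Submodule.span R (x '' Set.Ico (N n) (N (n + 1)))) (a b : ℕ) :
    Submodule.span R (y '' Set.Ico a b) ≤ Submodule.span R (x '' Set.Ico (N a) (N b)) := by
  rw [Submodule.span_le]
  rintro _ ⟨i, hi, rfl⟩
  exact Submodule.span_mono (Set.image_mono (Set.Ico_subset_Ico (hN hi.1) (hN hi.2))) (h i)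

namespace BlockOf

lemma ne_zero (h : BlockOf R x y) (n : ℕ) : y n ≠ 0 := h.1 n

lemma refl (h : ∀ n, x n ≠ 0) : BlockOf R x x :=
  ⟨h, id, strictMono_id, fun n => Submodule.subset_span ⟨n, by simp, rfl⟩⟩

lemma trans (hxy : BlockOf R x y) (hyz : BlockOf R y z) : BlockOf R x z := by
  obtain ⟨-, N, hN, hy⟩ := hxy
  obtain ⟨hz, N', hN', hz'⟩ := hyz
  exact ⟨hz, N ∘ N', hN.comp hN', fun n => span_image_Ico_le hN.monotone hy _ _ (hz' n)⟩

lemma shift (h : BlockOf R x y) (m : ℕ) : BlockOf R x fun n => y (n + m) := by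
  obtain ⟨hy, N, hN, h⟩ := h
  refine ⟨fun n => hy _, fun n => N (n + m), fun a b hab => hN (by lia), fun n => ?_⟩
  simpa only [add_right_comm] using h (n + m)

lemma shift_shift (h : BlockOf R x y) (m : ℕ) :
    BlockOf R (fun n => x (n + m)) fun n => y (n + m) := by
  obtain ⟨hy, N, hN, h⟩ := h
  have le_N (n : ℕ) : m ≤ N (n + m) := le_add_self.trans hN.le_apply
  refine ⟨fun n => hy _, fun n => N (n + m) - m, fun a b hab => ?_, fun n => ?_⟩
  · exact Nat.sub_lt_sub_right (le_N a) (hN (by lia))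
  · have hIco : (fun i => i + m) '' Set.Ico (N (n + m) - m) (N (n + 1 + m) - m) =
        Set.Ico (N (n + m)) (N (n + m + 1)) := by
      rw [Set.image_add_const_Ico, Nat.sub_add_cancel (le_N _), Nat.sub_add_cancel (le_N _),
        add_right_comm]
    simpa only [← hIco, Set.image_image] using h (n + m)

lemma eventuallyBlockOf (h : BlockOf R x y) : EventuallyBlockOf R x y := ⟨0, by simpa using h⟩

lemma tailSpan_le (h : BlockOf R x y) (n : ℕ) : tailSpan R y n ≤ tailSpan R x n := by
  obtain ⟨-, N, hN, h⟩ := h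
  rw [tailSpan, Submodule.span_le]
  rintro _ ⟨i, hi, rfl⟩
  have : n ≤ N i := le_trans hi hN.le_apply
  exact Submodule.span_mono (Set.image_mono fun j hj => this.trans hj.1) (h i)

lemma diagonal {X : ℕ → ℕ → M} (h : ∀ n, BlockOf R (X n) (X (n + 1))) (h₀ : ∀ i, X 0 i ≠ 0) :
    BlockOf R (X 0) fun n => X n n := by
  choose hne N hN hX using h
  let P : ℕ → ℕ → ℕ := fun n => Nat.rec id (fun n g => g ∘ N n) n
  have hP (n : ℕ) : StrictMono (P n) := by
    induction n with
    | zero => exact strictMono_id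
    | succ n ih => exact ih.comp (hN n)
  have hP_le (n j : ℕ) : P n j ≤ P (n + 1) j := (hP n).monotone (hN n).le_apply
  have hXP (n : ℕ) :
      ∀ j, X n j ∈ Submodule.span R (X 0 '' Set.Ico (P n j) (P n (j + 1))) := by
    induction n with
    | zero => exact fun j => Submodule.subset_span ⟨j, by simp [P], rfl⟩
    | succ n ih => exact fun j => span_image_Ico_le (hP n).monotone ih _ _ (hX n j)
  have hXne (n : ℕ) : X n n ≠ 0 := by
    cases n with
    | zero => exact h₀ 0
    | succ n => exact hne n _
  refine ⟨hXne, fun n => P n n, strictMono_nat_of_lt_succ fun n => ?_, fun n => ?_⟩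
  · exact (hP n n.lt_succ_self).trans_le (hP_le n _)
  · exact Submodule.span_mono (Set.image_mono (Set.Ico_subset_Ico le_rfl (hP_le n _))) (hXP n n)

end BlockOf

namespace EventuallyBlockOf

lemma tailSpan_le (h : EventuallyBlockOf R x y) (n : ℕ) : ∃ k, tailSpan R y k ≤ tailSpan R x n := by
  obtain ⟨m, h⟩ := h
  exact ⟨n + m, tailSpan_shift (R := R) y m n ▸ h.tailSpan_le n⟩

lemma exists_blockOf_shift (hxy : EventuallyBlockOf R x y) (hyz : BlockOf R y z) :
    ∃ m, BlockOf R x fun n => z (n + m) :=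
  hxy.imp fun m h => h.trans (hyz.shift_shift m)

end EventuallyBlockOf

end Blocks

/-! ### Diagonalisation and stabilisation -/

section Diagonalisation

variable {R M ι : Type*} [Ring R] [AddCommGroup M] [Module R M] {x₀ : ℕ → M}

lemma exists_blockOf_forall_nat {Q : ℕ → (ℕ → M) → Prop} (h₀ : ∀ n, x₀ n ≠ 0)
    (hdense : ∀ n x, BlockOf R x₀ x → ∃ y, BlockOf R x y ∧ Q n y)
    (hclosed : ∀ n x y, EventuallyBlockOf R x y → Q n x → Q n y) :
    ∃ x, BlockOf R x₀ x ∧ ∀ n, Q n x := by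
  choose! f hf hQ using hdense
  let X : ℕ → ℕ → M := fun n => Nat.rec x₀ f n
  have hX₀ (n : ℕ) : BlockOf R x₀ (X n) := by
    induction n with
    | zero => exact .refl h₀
    | succ n ih => exact ih.trans (hf n _ ih)
  have hX (n : ℕ) : BlockOf R (X n) (X (n + 1)) := hf n _ (hX₀ n)
  have hdiag (m : ℕ) : EventuallyBlockOf R (X m) fun n => X n n := by
    have := BlockOf.diagonal (X := fun n i => X (n + m) (i + m))
      (fun n => by simpa only [add_right_comm] using (hX (n + m)).shift_shift m)
      (fun i => (hX₀ _).ne_zero _)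
    refine ⟨m, BlockOf.trans ?_ this⟩
    simpa using (BlockOf.refl (hX₀ m).ne_zero).shift m
  exact ⟨fun n => X n n, .diagonal hX h₀, fun n => hclosed n _ _ (hdiag (n + 1)) (hQ n _ (hX₀ n))⟩

lemma exists_blockOf_forall [Countable ι] {Q : ι → (ℕ → M) → Prop} (h₀ : ∀ n, x₀ n ≠ 0)
    (hdense : ∀ i x, BlockOf R x₀ x → ∃ y, BlockOf R x y ∧ Q i y)
    (hclosed : ∀ i x y, EventuallyBlockOf R x y → Q i x → Q i y) :
    ∃ x, BlockOf R x₀ x ∧ ∀ i, Q i x := by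
  rcases isEmpty_or_nonempty ι with hι | hι
  · exact ⟨x₀, .refl h₀, isEmptyElim⟩
  · obtain ⟨g, hg⟩ := exists_surjective_nat ι
    obtain ⟨x, hx, h⟩ := exists_blockOf_forall_nat h₀ (fun n => hdense (g n))
      (fun n => hclosed (g n))
    exact ⟨x, hx, hg.forall.2 h⟩

lemma exists_blockOf_stable [Countable ι] {Θ : ι → (ℕ → M) → Prop} (h₀ : ∀ n, x₀ n ≠ 0)
    (hΘ : ∀ i x y, EventuallyBlockOf R x y → Θ i y → Θ i x) :
    ∃ x, BlockOf R x₀ x ∧ ∀ i, Θ i x → ∀ y, BlockOf R x y → Θ i y := by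
  refine exists_blockOf_forall h₀ (fun i x hx => ?_) (fun i x y hxy hx hy z hz => ?_)
  · by_cases h : ∃ y, BlockOf R x y ∧ ¬ Θ i y
    · obtain ⟨y, hy, hΘy⟩ := h
      exact ⟨y, hy, fun h => absurd h hΘy⟩
    · push Not at h
      exact ⟨x, .refl hx.ne_zero, fun _ => h⟩
  · obtain ⟨m, hm⟩ := hxy.exists_blockOf_shift hz
    exact hΘ i _ _ ((BlockOf.refl hz.ne_zero).shift m).eventuallyBlockOf
      (hx (hΘ i _ _ hxy hy) _ hm)

end Diagonalisation

/-! ### Games with a decreasing clock -/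

section Clock

variable {L M M' P P' : Type*} {lt : L → L → Prop} {move : M → P → P → Prop}
  {move' : M' → P' → P' → Prop} {a b : L} {p : P}

/-- From position `p` the second player can answer every sequence of challenges `m : M`, where with
each challenge the first player also lowers the clock, which starts at `a`, along `lt`. The
strategy is encoded by the set `S` of clock values and positions it never leaves, so that no
well-foundedness of `lt` is needed: for `lt` always true the game is infinite. -/
def Survives (lt : L → L → Prop) (move : M → P → P → Prop) (a : L) (p : P) : Prop :=
  ∃ S : L → P → Prop, S a p ∧
    ∀ a p, S a p → ∀ b, lt b a → ∀ m, ∃ q, move m p q ∧ S b q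

namespace Survives

lemma exists_move (h : Survives lt move a p) (hb : lt b a) (m : M) :
    ∃ q, move m p q ∧ Survives lt move b q := by
  obtain ⟨S, hp, hS⟩ := h
  obtain ⟨q, hq, hSq⟩ := hS a p hp b hb m
  exact ⟨q, hq, S, hSq, hS⟩

lemma of_forall_exists_move
    (h : ∀ b, lt b a → ∀ m, ∃ q, move m p q ∧ Survives lt move b q) : Survives lt move a p := by
  refine ⟨fun b q => (b = a ∧ q = p) ∨ Survives lt move b q, .inl ⟨rfl, rfl⟩, ?_⟩
  rintro _ _ (⟨rfl, rfl⟩ | hq) b hb m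
  · exact (h b hb m).imp fun _ hq => ⟨hq.1, .inr hq.2⟩
  · exact (hq.exists_move hb m).imp fun _ hq => ⟨hq.1, .inr hq.2⟩

lemma simulate {sim : P → P' → Prop} {p' : P'} (h : Survives lt move a p) (hp : sim p p')
    (hsim : ∀ p p', sim p p' → ∀ m', ∃ m, ∀ q, move m p q → ∃ q', move' m' p' q' ∧ sim q q') :
    Survives lt move' a p' := by
  obtain ⟨S, hS, h⟩ := h
  refine ⟨fun a p' => ∃ p, S a p ∧ sim p p', ⟨p, hS, hp⟩, ?_⟩
  rintro a p' ⟨p, hp, hpp'⟩ b hb m'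
  obtain ⟨m, hm⟩ := hsim p p' hpp' m'
  obtain ⟨q, hq, hSq⟩ := h a p hp b hb m
  obtain ⟨q', hq', hqq'⟩ := hm q hq
  exact ⟨q', hq', q, hSq, hqq'⟩

lemma anti [Preorder L] (h : Survives (· < ·) move a p) (hba : b ≤ a) :
    Survives (· < ·) move b p :=
  of_forall_exists_move fun _ hc m => h.exists_move (hc.trans_le hba) m

end Survives

lemma survives_Iic_top_iff [Preorder L] :
    Survives (fun b c : Set.Iic a => b < c) move ⊤ p ↔
      Survives (fun b c : L => b < c) move a p := by
  constructor
  · rintro ⟨S, hp, hS⟩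
    refine ⟨fun b q => ∃ hb : b ≤ a, S ⟨b, hb⟩ q, ⟨le_rfl, hp⟩, ?_⟩
    rintro b q ⟨hb, hq⟩ c hc m
    obtain ⟨q', hq', hSq'⟩ := hS _ q hq ⟨c, hc.le.trans hb⟩ hc m
    exact ⟨q', hq', _, hSq'⟩
  · rintro ⟨S, hp, hS⟩
    exact ⟨fun b => S b, hp, fun b q hq c hc m => hS b q hq c hc m⟩

end Clock

/-! ### Embedding games over a countable module -/

section Games

variable {R E L : Type*} [Ring R] [AddCommGroup E] [Module R E]

/-- The relation `Γ` distorts `ν` by a factor at most `K`; for `ν` a norm, `Γ` is then the graph of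
a `K`-isomorphism between its domain and its range. -/
def Distorts (ν : E → ℝ) (K : ℕ) (Γ : Submodule R (E × E)) : Prop :=
  ∀ p ∈ Γ, ν p.1 ≤ K * ν p.2 ∧ ν p.2 ≤ K * ν p.1

/-- `Γ'` is a partial `K`-embedding into `T` which extends `Γ` and is defined on `C`. -/
structure ExtendsOver (ν : E → ℝ) (K : ℕ) (T C : Submodule R E) (Γ Γ' : Submodule R (E × E)) :
    Prop where
  le : Γ ≤ Γ'
  range_le : Γ'.map (LinearMap.snd R E E) ≤ T
  le_domain : C ≤ Γ'.map (LinearMap.fst R E E)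
  distorts : Distorts ν K Γ'

/-- The finitely generated submodules the first player may ask to be embedded. -/
abbrev Challenge (U : Submodule R E) := {C : Submodule R E // C.FG ∧ C ≤ U}

/-- The second player can build step by step a `K`-embedding of `U` into `T` that extends `Γ`, for
as long as the clock `a` runs. -/
def EmbedsFor (ν : E → ℝ) (lt : L → L → Prop) (K : ℕ) (U T : Submodule R E) (a : L)
    (Γ : Submodule R (E × E)) : Prop :=
  Survives lt (fun C : Challenge U => ExtendsOver ν K T C) a Γ

variable (R E) in
/-- A position in the asymptotic game: the partial embedding built so far, and the space spanned
by the vectors the second player has been allowed to use. -/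
@[ext]
structure Position where
  rel : Submodule R (E × E)
  space : Submodule R E
  rel_fg : rel.FG
  space_fg : space.FG

instance : Bot (Position R E) := ⟨⟨⊥, ⊥, Submodule.fg_bot, Submodule.fg_bot⟩⟩

instance {M : Type*} [AddCommGroup M] [Module R M] [Countable M] :
    Countable {N : Submodule R M // N.FG} :=
  Function.Surjective.countable
    (f := fun s : Finset M => (⟨Submodule.span R s, s, rfl⟩ : {N : Submodule R M // N.FG}))
    fun ⟨_, s, hs⟩ => ⟨s, Subtype.ext hs⟩

instance [Countable E] : Countable (Position R E) :=
  Function.Injective.countable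
    (f := fun p : Position R E => ((⟨p.rel, p.rel_fg⟩, ⟨p.space, p.space_fg⟩) :
      {Γ : Submodule R (E × E) // Γ.FG} × {G : Submodule R E // G.FG}))
    fun p q h => by simpa [Position.ext_iff] using h

/-- A move of the second player answering the challenge `C`: finitely many new vectors are taken
from `V`, and the partial embedding is extended to `C` within the space available. -/
def Answers (ν : E → ℝ) (K : ℕ) (V C : Submodule R E) (p q : Position R E) : Prop :=
  (∃ F ≤ V, F.FG ∧ q.space = p.space ⊔ F) ∧ ExtendsOver ν K q.space C p.rel q.rel

/-- The second player survives the asymptotic game: in each round the first player lowers the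
clock, chooses `n`, and asks for a finitely generated submodule of `U` to be embedded using vectors
of `V n`. -/
def WinsAsymptotic (ν : E → ℝ) (lt : L → L → Prop) (K : ℕ) (U : Submodule R E)
    (V : ℕ → Submodule R E) (a : L) (p : Position R E) : Prop :=
  Survives lt (fun m : ℕ × Challenge U => Answers ν K (V m.1) m.2) a p

variable {ν : E → ℝ} {lt : L → L → Prop} {K : ℕ} {U U' C : Submodule R E}
  {V V' : ℕ → Submodule R E} {a b : L} {p q : Position R E}

lemma Answers.mono {V V' : Submodule R E} (hV : V ≤ V') (h : Answers ν K V C p q) :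
    Answers ν K V' C p q :=
  ⟨h.1.imp fun _ hF => ⟨hF.1.trans hV, hF.2⟩, h.2⟩

lemma WinsAsymptotic.mono (hU : U' ≤ U) (hV : ∀ n, ∃ k, V k ≤ V' n)
    (h : WinsAsymptotic ν lt K U V a p) : WinsAsymptotic ν lt K U' V' a p := by
  refine Survives.simulate (sim := Eq) h rfl ?_
  rintro p _ rfl ⟨n, C, hC, hCU⟩
  obtain ⟨k, hk⟩ := hV n
  exact ⟨(k, ⟨C, hC, hCU.trans hU⟩), fun q hq => ⟨q, hq.mono hk, rfl⟩⟩

/-- The composition of two linear relations. -/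
def relComp {A B C : Type*} [AddCommGroup A] [AddCommGroup B] [AddCommGroup C]
    [Module R A] [Module R B] [Module R C] (Γ : Submodule R (A × B)) (Δ : Submodule R (B × C)) :
    Submodule R (A × C) where
  carrier := {p | ∃ b, (p.1, b) ∈ Γ ∧ (b, p.2) ∈ Δ}
  zero_mem' := ⟨0, Γ.zero_mem, Δ.zero_mem⟩
  add_mem' := by
    rintro p q ⟨b, hb, hb'⟩ ⟨c, hc, hc'⟩
    exact ⟨b + c, Γ.add_mem hb hc, Δ.add_mem hb' hc'⟩
  smul_mem' := by
    rintro r p ⟨b, hb, hb'⟩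
    exact ⟨r • b, Γ.smul_mem r hb, Δ.smul_mem r hb'⟩

lemma relComp_bot_bot : relComp (⊥ : Submodule R (E × E)) (⊥ : Submodule R (E × E)) = ⊥ := by
  rw [eq_bot_iff]
  rintro ⟨p, q⟩ ⟨b, hb, hb'⟩
  simp_all

lemma Distorts.relComp {Γ Δ : Submodule R (E × E)} {K' : ℕ} (hΓ : Distorts ν K Γ)
    (hΔ : Distorts ν K' Δ) : Distorts ν (K * K') (relComp Γ Δ) := by
  rintro ⟨p, q⟩ ⟨c, hc, hc'⟩
  have h₁ := hΓ _ hc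
  have h₂ := hΔ _ hc'
  push_cast
  constructor
  · calc ν p ≤ K * ν c := h₁.1
      _ ≤ K * (K' * ν q) := by gcongr; exact h₂.1
      _ = K * K' * ν q := by ring
  · calc ν q ≤ K' * ν c := h₂.2
      _ ≤ K' * (K * ν p) := by gcongr; exact h₁.2
      _ = K * K' * ν p := by ring

lemma ExtendsOver.relComp {T T' C' : Submodule R E} {Γ Γ' Δ Δ' : Submodule R (E × E)} {K' : ℕ}
    (hΓ : ExtendsOver ν K T C Γ Γ') (hΔ : ExtendsOver ν K' T' C' Δ Δ')
    (hT : T ≤ Δ'.map (LinearMap.fst R E E)) :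
    ExtendsOver ν (K * K') T' C (relComp Γ Δ) (relComp Γ' Δ') where
  le := by
    rintro p ⟨c, hc, hc'⟩
    exact ⟨c, hΓ.le hc, hΔ.le hc'⟩
  range_le := by
    rintro _ ⟨p, ⟨c, -, hc'⟩, rfl⟩
    exact hΔ.range_le ⟨(c, p.2), hc', rfl⟩
  le_domain := by
    intro c hc
    obtain ⟨⟨c, d⟩, hcd, rfl⟩ := hΓ.le_domain hc
    obtain ⟨⟨_, f⟩, hdf, rfl⟩ := hT (hΓ.range_le ⟨(c, d), hcd, rfl⟩)
    exact ⟨(c, f), ⟨_, hcd, hdf⟩, rfl⟩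
  distorts := hΓ.distorts.relComp hΔ.distorts

end Games

/-! ### Winning strategies on block sequences -/

section BlockGames

variable {R E L : Type*} [Ring R] [AddCommGroup E] [Module R E]
  {ν : E → ℝ} {lt : L → L → Prop} {K : ℕ} {a b : L} {p q : Position R E} {x y w : ℕ → E}
  {C : Submodule R E}

/-- The second player wins the asymptotic game for embedding some block sequence of `x` into
the tails of `x`. -/
def WinsForBlock (ν : E → ℝ) (lt : L → L → Prop) (K : ℕ) (a : L) (p : Position R E)
    (x : ℕ → E) : Prop :=
  ∃ w, BlockOf R x w ∧ WinsAsymptotic ν lt K (tailSpan R w 0) (tailSpan R x) a p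

/-- Within every tail of `x` the second player can answer the challenge `C` by a move to a
position from which he wins. -/
def AnswersInTails (ν : E → ℝ) (lt : L → L → Prop) (K : ℕ) (b : L) (p : Position R E)
    (C : Submodule R E) (x : ℕ → E) : Prop :=
  ∀ n, ∃ q, Answers ν K (tailSpan R x n) C p q ∧ WinsForBlock ν lt K b q x

lemma WinsForBlock.of_eventuallyBlockOf (hxy : EventuallyBlockOf R x y)
    (h : WinsForBlock ν lt K a p y) : WinsForBlock ν lt K a p x := by
  obtain ⟨w, hw, hwin⟩ := h
  obtain ⟨m, hm⟩ := hxy.exists_blockOf_shift hw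
  exact ⟨_, hm, hwin.mono (((BlockOf.refl hw.ne_zero).shift m).tailSpan_le 0) hxy.tailSpan_le⟩

lemma AnswersInTails.of_eventuallyBlockOf (hxy : EventuallyBlockOf R x y)
    (h : AnswersInTails ν lt K b p C y) : AnswersInTails ν lt K b p C x := by
  intro n
  obtain ⟨k, hk⟩ := hxy.tailSpan_le n
  obtain ⟨q, hq, hwin⟩ := h k
  exact ⟨q, hq.mono hk, hwin.of_eventuallyBlockOf hxy⟩

lemma WinsAsymptotic.answersInTails (hw : BlockOf R x w)
    (h : WinsAsymptotic ν lt K (tailSpan R w 0) (tailSpan R x) a p) (hb : lt b a)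
    (hC : C.FG) (hCw : C ≤ tailSpan R w 0) : AnswersInTails ν lt K b p C x := fun n => by
  obtain ⟨q, hq, hwin⟩ := h.exists_move hb (n, ⟨C, hC, hCw⟩)
  exact ⟨q, hq, w, hw, hwin⟩

/-- The two strategies are composed: the answers of the first game are fed as challenges to the
second one, which by stability can be played inside any block sequence `z` of `x`. -/
lemma WinsAsymptotic.embedsFor {z : ℕ → E} {U : Submodule R E} (hxz : BlockOf R x z)
    (hans : ∀ b (p : Position R E) (C : Submodule R E), C.FG → AnswersInTails ν lt K b p C x →
      AnswersInTails ν lt K b p C z)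
    (hy : ∀ a b (p : Position R E), lt b a → WinsForBlock ν lt K a p x →
      ∃ m, ∀ C : Submodule R E, C.FG → C ≤ tailSpan R y m → AnswersInTails ν lt K b p C x)
    (hU : WinsAsymptotic ν lt K U (tailSpan R y) a ⊥)
    (hx : WinsForBlock ν lt K a (⊥ : Position R E) x) :
    EmbedsFor ν lt (K * K) U (tailSpan R z 0) a (⊥ : Submodule R (E × E)) := by
  refine ⟨fun a Γ => ∃ p q : Position R E, WinsAsymptotic ν lt K U (tailSpan R y) a p ∧
    WinsForBlock ν lt K a q x ∧ p.space ≤ q.rel.map (LinearMap.fst R E E) ∧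
    q.space ≤ tailSpan R z 0 ∧ Γ = relComp p.rel q.rel,
    ⟨⊥, ⊥, hU, hx, bot_le, bot_le, relComp_bot_bot.symm⟩, ?_⟩
  rintro a _ ⟨p, q, hp, hq, hpq, hqz, rfl⟩ b hb C
  obtain ⟨m, hm⟩ := hy a b q hb hq
  obtain ⟨p', ⟨⟨F, hFy, hF, hp'F⟩, hpp'⟩, hwinp'⟩ := hp.exists_move hb (m, C)
  obtain ⟨q', ⟨⟨F', hFz', -, hq'F⟩, hqq'⟩, hwinq'⟩ := hans b q F hF (hm F hF hFy) 0
  have hp'q' : p'.space ≤ q'.rel.map (LinearMap.fst R E E) :=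
    hp'F ▸ sup_le (hpq.trans (Submodule.map_mono hqq'.le)) hqq'.le_domain
  have hq'z : q'.space ≤ tailSpan R z 0 := hq'F ▸ sup_le hqz hFz'
  have hext := hpp'.relComp hqq' hp'q'
  exact ⟨relComp p'.rel q'.rel, ⟨hext.le, hext.range_le.trans hq'z, hext.le_domain, hext.distorts⟩,
    p', q', hwinp', hwinq'.of_eventuallyBlockOf hxz.eventuallyBlockOf, hp'q', hq'z, rfl⟩

variable {x₀ : ℕ → E}

lemma exists_uniform_constant (h₀ : ∀ n, x₀ n ≠ 0)
    (h : ∀ x, BlockOf R x₀ x → ∃ K, WinsForBlock ν lt K a p x) :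
    ∃ K x, BlockOf R x₀ x ∧ ∀ y, BlockOf R x y → WinsForBlock ν lt K a p y := by
  by_contra! hcon
  obtain ⟨x, hx, hlose⟩ := exists_blockOf_forall (R := R)
    (Q := fun (K : ℕ) x => ¬ WinsForBlock ν lt K a p x) h₀ hcon
    fun K x y hxy hx hy => hx (hy.of_eventuallyBlockOf hxy)
  obtain ⟨K, hK⟩ := h x hx
  exact hlose K hK

variable [Countable L] [Countable E]

lemma exists_stable_game (ν : E → ℝ) (lt : L → L → Prop) (K : ℕ) (h₀ : ∀ n, x₀ n ≠ 0) :
    ∃ x, BlockOf R x₀ x ∧ ∀ y, BlockOf R x y →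
      (∀ a (p : Position R E), WinsForBlock ν lt K a p x → WinsForBlock ν lt K a p y) ∧
      ∀ b p (C : Submodule R E), C.FG → AnswersInTails ν lt K b p C x →
        AnswersInTails ν lt K b p C y := by
  obtain ⟨x, hx, hwin⟩ := exists_blockOf_stable (R := R)
    (Θ := fun (i : L × Position R E) x => WinsForBlock ν lt K i.1 i.2 x) h₀
    fun i x y hxy h => h.of_eventuallyBlockOf hxy
  obtain ⟨x', hx', hans⟩ := exists_blockOf_stable (R := R)
    (Θ := fun (i : L × Position R E × {C : Submodule R E // C.FG}) x =>
      AnswersInTails ν lt K i.1 i.2.1 i.2.2 x) hx.ne_zero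
    fun i x y hxy h => h.of_eventuallyBlockOf hxy
  refine ⟨x', hx.trans hx', fun y hy => ⟨fun a p h => ?_, fun b p C hC => ?_⟩⟩
  · exact hwin (a, p) (h.of_eventuallyBlockOf hx'.eventuallyBlockOf) y (hx'.trans hy)
  · exact fun h => hans (b, p, ⟨C, hC⟩) h y hy

lemma exists_blockOf_answersInTails (hx : ∀ n, x n ≠ 0)
    (hwin : ∀ a (p : Position R E), WinsForBlock ν lt K a p x →
      ∀ y, BlockOf R x y → WinsForBlock ν lt K a p y) :
    ∃ y, BlockOf R x y ∧ ∀ a b (p : Position R E), lt b a → WinsForBlock ν lt K a p x →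
      ∃ m, ∀ C : Submodule R E, C.FG → C ≤ tailSpan R y m → AnswersInTails ν lt K b p C x := by
  refine (exists_blockOf_forall (R := R) (x₀ := x)
    (Q := fun (i : L × L × Position R E) y => lt i.2.1 i.1 → WinsForBlock ν lt K i.1 i.2.2 x →
      ∃ m, ∀ C : Submodule R E, C.FG → C ≤ tailSpan R y m →
        AnswersInTails ν lt K i.2.1 i.2.2 C x) hx ?_ ?_).imp
    fun y hy => ⟨hy.1, fun a b p => hy.2 (a, b, p)⟩
  · rintro ⟨a, b, p⟩ z hz
    by_cases h : WinsForBlock ν lt K a p x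
    · obtain ⟨w, hw, hwinw⟩ := hwin a p h z hz
      exact ⟨w, hw, fun hba _ => ⟨0, fun C hC hCw =>
        (hwinw.answersInTails hw hba hC hCw).of_eventuallyBlockOf hz.eventuallyBlockOf⟩⟩
    · exact ⟨z, .refl hz.ne_zero, fun _ h' => absurd h' h⟩
  · rintro ⟨a, b, p⟩ z z' hz h hba hp
    obtain ⟨m, hm⟩ := h hba hp
    obtain ⟨m', hm'⟩ := hz.tailSpan_le m
    exact ⟨m', fun C hC hCz => hm C hC (hCz.trans hm')⟩

theorem exists_blockOf_embedsFor (h₀ : ∀ n, x₀ n ≠ 0)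
    (h : ∀ x, BlockOf R x₀ x → ∃ K, WinsForBlock ν lt K a (⊥ : Position R E) x) :
    ∃ x, BlockOf R x₀ x ∧ ∃ y, BlockOf R x y ∧ ∃ K, ∀ z, BlockOf R x z →
      EmbedsFor ν lt K (tailSpan R y 0) (tailSpan R z 0) a ⊥ := by
  obtain ⟨K, x₁, hx₁, hK⟩ := exists_uniform_constant h₀ h
  obtain ⟨x, hx, hstable⟩ := exists_stable_game (R := R) ν lt K hx₁.ne_zero
  obtain ⟨y, hy, hans⟩ := exists_blockOf_answersInTails hx.ne_zero
    fun a p h y hy => (hstable y hy).1 a p h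
  obtain ⟨w, hw, hwin⟩ := hK y (hx.trans hy)
  exact ⟨x, hx₁.trans hx, w, hy.trans hw, K * K, fun z hz =>
    hwin.embedsFor hz (hstable z hz).2 hans (hK x hx)⟩

end BlockGames

/-! ### Schauder bases and partial sum projections -/

section Projections

variable {V : Type*} [NormedAddCommGroup V] [NormedSpace ℝ V]

/-- `b` is a basic sequence whose partial sum projections extend to the ambient space with a common
bound, as is the case for all block sequences of a Schauder basis. -/
structure BasisProjections (b : ℕ → V) where
  const : ℝ
  proj : ℕ → V →L[ℝ] V
  ne_zero : ∀ n, b n ≠ 0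
  norm_proj_le : ∀ k v, ‖proj k v‖ ≤ const * ‖v‖
  proj_apply_basis : ∀ k i, proj k (b i) = if i < k then b i else 0

namespace BasisProjections

variable {b : ℕ → V} (h : BasisProjections b) {k n : ℕ} {s t : Set ℕ} {v w : V}

include h

lemma one_le_const : 1 ≤ h.const := by
  have := h.norm_proj_le 1 (b 0)
  rw [h.proj_apply_basis, if_pos one_pos] at this
  exact (le_mul_iff_one_le_left (norm_pos_iff.2 (h.ne_zero 0))).1 this

lemma const_pos : 0 < h.const := one_pos.trans_le h.one_le_const

lemma proj_eq_self (hs : s ⊆ Set.Iio k) (hv : v ∈ Submodule.span ℝ (b '' s)) :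
    h.proj k v = v := by
  refine LinearMap.eqOn_span (f := (h.proj k).toLinearMap) (g := LinearMap.id) ?_ hv
  rintro _ ⟨i, hi, rfl⟩
  simp [h.proj_apply_basis, if_pos (Set.mem_Iio.1 (hs hi))]

lemma proj_eq_zero (hs : s ⊆ Set.Ici k) (hv : v ∈ Submodule.span ℝ (b '' s)) :
    h.proj k v = 0 := by
  refine LinearMap.eqOn_span (f := (h.proj k).toLinearMap) (g := 0) ?_ hv
  rintro _ ⟨i, hi, rfl⟩
  simp [h.proj_apply_basis, if_neg (not_lt.2 (Set.mem_Ici.1 (hs hi)))]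

lemma proj_sum (hk : k ≤ n) (a : ℕ → ℝ) :
    h.proj k (∑ i ∈ Finset.range n, a i • b i) = ∑ i ∈ Finset.range k, a i • b i := by
  simp only [map_sum, map_smul, h.proj_apply_basis, smul_ite, smul_zero]
  rw [← Finset.sum_filter]
  congr 1
  ext i
  simp only [Finset.mem_filter, Finset.mem_range]
  lia

lemma norm_add_ge (hs : s ⊆ Set.Iio k) (ht : t ⊆ Set.Ici k)
    (hv : v ∈ Submodule.span ℝ (b '' s)) (hw : w ∈ Submodule.span ℝ (b '' t)) :
    ‖v‖ ≤ h.const * ‖v + w‖ ∧ ‖w‖ ≤ (1 + h.const) * ‖v + w‖ := by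
  have hproj : h.proj k (v + w) = v := by
    rw [map_add, h.proj_eq_self hs hv, h.proj_eq_zero ht hw, add_zero]
  have hv_le := hproj ▸ h.norm_proj_le k (v + w)
  refine ⟨hv_le, ?_⟩
  calc ‖w‖ = ‖(v + w) - v‖ := by simp
    _ ≤ ‖v + w‖ + ‖v‖ := norm_sub_le _ _
    _ ≤ (1 + h.const) * ‖v + w‖ := by linarith

lemma abs_coeff_mul_norm_le (a : ℕ → ℝ) {i : ℕ} (hi : i < n) :
    |a i| * ‖b i‖ ≤ 2 * h.const * ‖∑ j ∈ Finset.range n, a j • b j‖ := by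
  set v := ∑ j ∈ Finset.range n, a j • b j
  have hterm : a i • b i = h.proj (i + 1) v - h.proj i v := by
    rw [h.proj_sum hi, h.proj_sum hi.le, Finset.sum_range_succ, add_sub_cancel_left]
  calc |a i| * ‖b i‖ = ‖h.proj (i + 1) v - h.proj i v‖ := by
        rw [← hterm, norm_smul, Real.norm_eq_abs]
    _ ≤ ‖h.proj (i + 1) v‖ + ‖h.proj i v‖ := norm_sub_le _ _
    _ ≤ h.const * ‖v‖ + h.const * ‖v‖ := add_le_add (h.norm_proj_le _ _) (h.norm_proj_le _ _)
    _ = 2 * h.const * ‖v‖ := by ring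

lemma norm_sum_le_mul_norm_sum {w : ℕ → V} {r : ℝ} (hr : 0 ≤ r) (hw : ∀ i < n, ‖w i‖ ≤ r * ‖b i‖)
    (a : ℕ → ℝ) : ‖∑ i ∈ Finset.range n, a i • w i‖ ≤
      n * r * (2 * h.const) * ‖∑ i ∈ Finset.range n, a i • b i‖ := by
  have hterm (i : ℕ) (hi : i < n) : ‖a i • w i‖ ≤
      r * (2 * h.const * ‖∑ i ∈ Finset.range n, a i • b i‖) :=
    calc ‖a i • w i‖ = |a i| * ‖w i‖ := by rw [norm_smul, Real.norm_eq_abs]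
      _ ≤ |a i| * (r * ‖b i‖) := by gcongr; exact hw i hi
      _ = r * (|a i| * ‖b i‖) := by ring
      _ ≤ _ := mul_le_mul_of_nonneg_left (h.abs_coeff_mul_norm_le a hi) hr
  refine (norm_sum_le_of_le _ fun i hi => hterm i (Finset.mem_range.1 hi)).trans_eq ?_
  simp only [Finset.sum_const, Finset.card_range, nsmul_eq_mul]
  ring

lemma linearIndependent : LinearIndependent ℝ b := by
  rw [linearIndependent_iff']
  intro s g hg i hi
  obtain ⟨n, hn⟩ := s.exists_nat_subset_range
  have := h.abs_coeff_mul_norm_le (fun j => if j ∈ s then g j else 0) (Finset.mem_range.1 (hn hi))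
  simp only [ite_smul, zero_smul] at this
  rw [Finset.sum_ite_mem, Finset.inter_eq_right.2 hn, hg, norm_zero, mul_zero, if_pos hi] at this
  have hbi := norm_pos_iff.2 (h.ne_zero i)
  exact abs_eq_zero.1 (le_antisymm (nonpos_of_mul_nonpos_left this hbi) (abs_nonneg _))

lemma norm_sum_sub_sum_le (p q : ℕ → V) {η : ℝ} (hη : 0 ≤ η)
    (hpq : ∀ i < n, ‖p i - q i‖ ≤ η / (4 * h.const) * (1 / 2) ^ i * ‖b i‖) (a : ℕ → ℝ) :
    ‖∑ i ∈ Finset.range n, a i • p i - ∑ i ∈ Finset.range n, a i • q i‖ ≤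
      η * ‖∑ i ∈ Finset.range n, a i • b i‖ := by
  have hC := h.const_pos
  set v := ∑ i ∈ Finset.range n, a i • b i
  have hterm (i : ℕ) (hi : i < n) : ‖a i • p i - a i • q i‖ ≤ (1 / 2) ^ i * (η / 2 * ‖v‖) :=
    calc ‖a i • p i - a i • q i‖ = |a i| * ‖p i - q i‖ := by
          rw [← smul_sub, norm_smul, Real.norm_eq_abs]
      _ ≤ |a i| * (η / (4 * h.const) * (1 / 2) ^ i * ‖b i‖) := by gcongr; exact hpq i hi
      _ = η / (4 * h.const) * (1 / 2) ^ i * (|a i| * ‖b i‖) := by ring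
      _ ≤ η / (4 * h.const) * (1 / 2) ^ i * (2 * h.const * ‖v‖) :=
          mul_le_mul_of_nonneg_left (h.abs_coeff_mul_norm_le a hi) (by positivity)
      _ = (1 / 2) ^ i * (η / 2 * ‖v‖) := by field_simp; ring
  calc ‖∑ i ∈ Finset.range n, a i • p i - ∑ i ∈ Finset.range n, a i • q i‖
      ≤ ∑ i ∈ Finset.range n, ‖a i • p i - a i • q i‖ := by
        rw [← Finset.sum_sub_distrib]; exact norm_sum_le _ _
    _ ≤ ∑ i ∈ Finset.range n, (1 / 2) ^ i * (η / 2 * ‖v‖) :=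
        Finset.sum_le_sum fun i hi => hterm i (Finset.mem_range.1 hi)
    _ = (∑ i ∈ Finset.range n, (1 / 2 : ℝ) ^ i) * (η / 2 * ‖v‖) := by rw [Finset.sum_mul]
    _ ≤ 2 * (η / 2 * ‖v‖) := by gcongr; exact sum_geometric_two_le n
    _ = η * ‖v‖ := by ring

omit h in
lemma exists_of_blockOf {y : ℕ → V} (h : BasisProjections b) (hy : BlockOf ℝ b y) :
    ∃ h' : BasisProjections y, h'.const = h.const := by
  obtain ⟨hy₀, N, hN, hy⟩ := hy
  refine ⟨⟨h.const, fun k => h.proj (N k), hy₀, fun k => h.norm_proj_le _, fun k i => ?_⟩, rfl⟩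
  split_ifs with hik
  · exact h.proj_eq_self (fun j hj => hj.2.trans_le (hN.monotone hik)) (hy i)
  · exact h.proj_eq_zero (fun j hj => (hN.monotone (not_lt.1 hik)).trans hj.1) (hy i)

end BasisProjections

lemma exists_eq_sum_range_of_tendsto (e : ℕ → V) {a : ℕ → ℕ → ℝ} {s : ℕ → V}
    (hs : ∀ N, Tendsto (fun k => ∑ i ∈ Finset.range N, a k i • e i) atTop (𝓝 (s N))) :
    ∃ c : ℕ → ℝ, ∀ N, s N = ∑ i ∈ Finset.range N, c i • e i := by
  have hdiff (n : ℕ) : s (n + 1) - s n ∈ Submodule.span ℝ {e n} := by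
    have hclosed : IsClosed (Submodule.span ℝ {e n} : Set V) :=
      Submodule.closed_of_finiteDimensional _
    refine hclosed.mem_of_tendsto ((hs (n + 1)).sub (hs n)) (.of_forall fun k => ?_)
    rw [Finset.sum_range_succ, add_sub_cancel_left]
    exact Submodule.smul_mem _ _ (Submodule.mem_span_singleton_self _)
  choose c hc using fun n => Submodule.mem_span_singleton.1 (hdiff n)
  refine ⟨c, fun N => ?_⟩
  have hs₀ : s 0 = 0 := tendsto_nhds_unique (hs 0) (by simp)
  rw [Finset.sum_congr rfl fun i _ => hc i, Finset.sum_range_sub, hs₀, sub_zero]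

end Projections

namespace IsSchauderBasis

variable {𝒲 : Type} [NormedAddCommGroup 𝒲] [NormedSpace ℝ 𝒲] {e : ℕ → 𝒲} (he : IsSchauderBasis e)

/-- The coordinates of a vector with respect to a Schauder basis. -/
noncomputable def coord (x : 𝒲) : ℕ → ℝ := (he x).choose

lemma tendsto_coord (x : 𝒲) :
    Tendsto (fun N => ∑ i ∈ Finset.range N, he.coord x i • e i) atTop (𝓝 x) :=
  (he x).choose_spec.1

lemma coord_eq {x : 𝒲} {a : ℕ → ℝ}
    (h : Tendsto (fun N => ∑ i ∈ Finset.range N, a i • e i) atTop (𝓝 x)) : he.coord x = a :=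
  ((he x).choose_spec.2 a h).symm

lemma coord_add (x y : 𝒲) : he.coord (x + y) = he.coord x + he.coord y :=
  he.coord_eq <| by
    simpa [add_smul, Finset.sum_add_distrib] using (he.tendsto_coord x).add (he.tendsto_coord y)

lemma coord_smul (r : ℝ) (x : 𝒲) : he.coord (r • x) = r • he.coord x :=
  he.coord_eq <| by simpa [mul_smul, Finset.smul_sum] using (he.tendsto_coord x).const_smul r

lemma coord_basis (i : ℕ) : he.coord (e i) = Pi.single i 1 := by
  refine he.coord_eq (tendsto_const_nhds.congr' ?_)
  filter_upwards [eventually_gt_atTop i] with N hN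
  simp [Pi.single_apply, ite_smul, Finset.sum_ite_eq', hN]

include he in
lemma ne_zero (n : ℕ) : e n ≠ 0 := fun hn => by
  have hzero : he.coord (e n) = 0 := he.coord_eq (by simp [hn])
  simpa [coord_basis] using congrFun hzero n

/-- The sequence of partial sums of the expansion of a vector. -/
noncomputable def partialSums : 𝒲 →ₗ[ℝ] BoundedContinuousFunction ℕ 𝒲 where
  toFun x := .ofNormedAddCommGroupDiscrete (fun N => ∑ i ∈ Finset.range N, he.coord x i • e i)
    (Metric.isBounded_range_of_tendsto _ (he.tendsto_coord x)).exists_norm_le.choose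
    fun N => (Metric.isBounded_range_of_tendsto _ (he.tendsto_coord x)).exists_norm_le.choose_spec
      _ ⟨N, rfl⟩
  map_add' x y := by ext N; simp [coord_add, add_smul, Finset.sum_add_distrib]
  map_smul' r x := by ext N; simp [coord_smul, mul_smul, Finset.smul_sum]

lemma partialSums_apply (x : 𝒲) (N : ℕ) :
    he.partialSums x N = ∑ i ∈ Finset.range N, he.coord x i • e i := rfl

lemma continuous_partialSums [CompleteSpace 𝒲] : Continuous he.partialSums := by
  refine LinearMap.continuous_of_seq_closed_graph _ fun u x s hu hs => ?_
  have hunif : TendstoUniformly (fun k => he.partialSums (u k)) s atTop :=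
    BoundedContinuousFunction.tendsto_iff_tendstoUniformly.1 hs
  obtain ⟨c, hc⟩ := exists_eq_sum_range_of_tendsto e fun N => hunif.tendsto_at N
  have hlim : Tendsto s atTop (𝓝 x) :=
    hunif.tendsto_of_eventually_tendsto (.of_forall fun k => he.tendsto_coord (u k)) hu
  ext N
  rw [hc, partialSums_apply, he.coord_eq (hlim.congr hc)]

theorem nonempty_basisProjections [CompleteSpace 𝒲] (he : IsSchauderBasis e) :
    Nonempty (BasisProjections e) := by
  let T : 𝒲 →L[ℝ] BoundedContinuousFunction ℕ 𝒲 := ⟨he.partialSums, he.continuous_partialSums⟩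
  refine ⟨‖T‖, fun N => (BoundedContinuousFunction.evalCLM ℝ N).comp T, he.ne_zero,
    fun k v => ((T v).norm_coe_le_norm k).trans (T.le_opNorm v), fun k i => ?_⟩
  change he.partialSums (e i) k = _
  simp [partialSums_apply, coord_basis, Pi.single_apply, ite_smul, Finset.sum_ite_eq']

end IsSchauderBasis

/-! ### Rational and real spans -/

section FiniteSpans

variable {R E : Type*} [Ring R] [AddCommGroup E] [Module R E] {x : ℕ → E} {v : E}

lemma exists_le_span_image_Iio {G : Submodule R E} {s : Set ℕ} (hG : G.FG)
    (h : G ≤ Submodule.span R (x '' s)) :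
    ∃ k, G ≤ Submodule.span R (x '' (s ∩ Set.Iio k)) := by
  classical
  obtain ⟨t, rfl⟩ := hG
  obtain ⟨t', ht's, htt'⟩ :=
    Submodule.subset_span_finite_of_subset_span (Submodule.span_le.1 h)
  obtain ⟨s', hs', rfl⟩ := Finset.subset_set_image_iff.1 ht's
  obtain ⟨k, hk⟩ := s'.exists_nat_subset_range
  refine ⟨k, Submodule.span_le.2 (htt'.trans (Submodule.span_mono ?_))⟩
  rw [Finset.coe_image]
  exact Set.image_mono fun i hi => ⟨hs' hi, Finset.mem_range.1 (hk hi)⟩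

lemma exists_mem_span_image_Ico {n : ℕ} (h : v ∈ tailSpan R x n) :
    ∃ k, n < k ∧ v ∈ Submodule.span R (x '' Set.Ico n k) := by
  obtain ⟨k, hk⟩ := exists_le_span_image_Iio (Submodule.fg_span_singleton v)
    ((Submodule.span_singleton_le_iff_mem _ _).2 h)
  refine ⟨max k (n + 1), by lia, Submodule.span_mono (Set.image_mono ?_)
    ((Submodule.span_singleton_le_iff_mem _ _).1 hk)⟩
  exact fun i hi => ⟨hi.1, lt_max_of_lt_left hi.2⟩

lemma mem_span_image_iff_exists_sum {s : Finset ℕ} :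
    v ∈ Submodule.span R (x '' s) ↔ ∃ a : ℕ → R, v = ∑ i ∈ s, a i • x i := by
  constructor
  · intro h
    obtain ⟨c, hc⟩ := Submodule.mem_span_image_finset_iff_exists_fun R |>.1 h
    refine ⟨fun i => if h : i ∈ s then c ⟨i, h⟩ else 0, ?_⟩
    rw [← hc, ← Finset.sum_coe_sort s]
    exact Finset.sum_congr rfl fun i _ => by simp
  · rintro ⟨a, rfl⟩
    exact Submodule.sum_mem _ fun i hi =>
      Submodule.smul_mem _ _ (Submodule.subset_span (Set.mem_image_of_mem _ hi))

end FiniteSpans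

section RationalSpans

variable {E M : Type*} [AddCommGroup E] [Module ℚ E] [AddCommGroup M] [Module ℝ M] (ι : E →+ M)

lemma map_mem_span_image {S : Set E} {f : E} (hf : f ∈ Submodule.span ℚ S) :
    ι f ∈ Submodule.span ℝ (ι '' S) := by
  induction hf using Submodule.span_induction with
  | mem v hv => exact Submodule.subset_span ⟨v, hv, rfl⟩
  | zero => simp
  | add f g _ _ hf hg => rw [map_add]; exact add_mem hf hg
  | smul q f _ hf => rw [← Rat.cast_id q, map_ratCast_smul ι ℚ ℝ]; exact Submodule.smul_mem _ _ hf

lemma linearIndependent_of_comp {x : ℕ → E} (h : LinearIndependent ℝ (ι ∘ x)) :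
    LinearIndependent ℚ x := by
  rw [linearIndependent_iff'] at h ⊢
  intro s g hg i hi
  have hsum : ∑ i ∈ s, (g i : ℝ) • (ι ∘ x) i = 0 := by
    rw [← map_zero ι, ← hg, map_sum]
    exact Finset.sum_congr rfl fun i _ => by
      rw [Function.comp_apply, ← map_ratCast_smul ι ℚ ℝ, Rat.cast_id]
  exact_mod_cast h s (fun i => (g i : ℝ)) hsum i hi

variable [TopologicalSpace M] [IsTopologicalAddGroup M] [ContinuousSMul ℝ M]

lemma topologicalClosure_span_image_subset (G : Submodule ℚ E) :
    ((Submodule.span ℝ (ι '' G)).topologicalClosure : Set M) ⊆ closure (ι '' G) := by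
  let N : Submodule ℝ M :=
    { carrier := closure (ι '' G)
      zero_mem' := subset_closure ⟨0, G.zero_mem, map_zero ι⟩
      add_mem' := fun hu hv => map_mem_closure₂ continuous_add hu hv <| by
        rintro _ ⟨f, hf, rfl⟩ _ ⟨g, hg, rfl⟩
        exact ⟨f + g, G.add_mem hf hg, map_add ι f g⟩
      smul_mem' := fun r u hu => map_mem_closure₂ continuous_smul (Rat.denseRange_cast r) hu <| by
        rintro _ ⟨q, rfl⟩ _ ⟨f, hf, rfl⟩
        exact ⟨(q : ℚ) • f, G.smul_mem _ hf, map_ratCast_smul ι ℚ ℝ q f⟩ }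
  exact Submodule.topologicalClosure_minimal (t := N) _ (Submodule.span_le.2 subset_closure)
    isClosed_closure

end RationalSpans

section RationalApproximation

variable {E F V W : Type*} [AddCommGroup E] [Module ℚ E] [AddCommGroup F] [Module ℚ F]
  [NormedAddCommGroup V] [NormedSpace ℝ V] [NormedAddCommGroup W] [NormedSpace ℝ W]

omit [NormedSpace ℝ V] [NormedSpace ℝ W] in
lemma isClosed_setOf_norm_le (K : ℝ) :
    IsClosed {p : V × W | ‖p.1‖ ≤ K * ‖p.2‖ ∧ ‖p.2‖ ≤ K * ‖p.1‖} :=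
  (isClosed_le (by fun_prop) (by fun_prop)).and (isClosed_le (by fun_prop) (by fun_prop))

lemma norm_le_of_mem_span_image (ι : E →+ V) (τ : F →+ W) {K : ℝ} {Γ : Submodule ℚ (E × F)}
    (h : ∀ p ∈ Γ, ‖ι p.1‖ ≤ K * ‖τ p.2‖ ∧ ‖τ p.2‖ ≤ K * ‖ι p.1‖) :
    ∀ p ∈ Submodule.span ℝ (ι.prodMap τ '' Γ), ‖p.1‖ ≤ K * ‖p.2‖ ∧ ‖p.2‖ ≤ K * ‖p.1‖ := by
  intro p hp
  refine closure_minimal ?_ (isClosed_setOf_norm_le K)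
    (topologicalClosure_span_image_subset (ι.prodMap τ) Γ
      (Submodule.le_topologicalClosure _ hp))
  rintro _ ⟨q, hq, rfl⟩
  exact h q hq

end RationalApproximation

section BlockSequences

variable {𝒲 : Type} [NormedAddCommGroup 𝒲] [NormedSpace ℝ 𝒲] {b y : ℕ → 𝒲}

lemma suppIn_iff_mem_span {v : 𝒲} {s : Finset ℕ} :
    SuppIn b v s ↔ v ∈ Submodule.span ℝ (b '' s) :=
  mem_span_image_iff_exists_sum.symm

lemma isBlockSeq_iff_blockOf : IsBlockSeq b y ↔ BlockOf ℝ b y := by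
  constructor
  · rintro ⟨hy₀, D, hD, hlt⟩
    have hne (n : ℕ) : (D n).Nonempty := by
      by_contra h
      have := suppIn_iff_mem_span.1 (hD n)
      simp_all
    refine ⟨hy₀, fun n => (D n).min' (hne n), strictMono_nat_of_lt_succ fun n =>
      hlt n _ (Finset.min'_mem _ _) _ (Finset.min'_mem _ _), fun n => ?_⟩
    refine Submodule.span_mono (Set.image_mono fun i hi => ?_) (suppIn_iff_mem_span.1 (hD n))
    exact ⟨Finset.min'_le _ _ hi, hlt n i hi _ (Finset.min'_mem _ _)⟩
  · rintro ⟨hy₀, N, -, hy⟩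
    refine ⟨hy₀, fun n => Finset.Ico (N n) (N (n + 1)), fun n => ?_, fun n i hi j hj => ?_⟩
    · rw [suppIn_iff_mem_span, Finset.coe_Ico]
      exact hy n
    · exact (Finset.mem_Ico.1 hi).2.trans_le (Finset.mem_Ico.1 hj).1

lemma BlockOf.map {E : Type*} [AddCommGroup E] [Module ℚ E] {ι : E →+ 𝒲}
    (hι : Function.Injective ι) {x y : ℕ → E} (h : BlockOf ℚ x y) :
    BlockOf ℝ (ι ∘ x) (ι ∘ y) := by
  obtain ⟨hy₀, N, hN, hy⟩ := h
  refine ⟨fun n hn => hy₀ n (hι (hn.trans (map_zero ι).symm)), N, hN, fun n => ?_⟩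
  rw [Set.image_comp]
  exact map_mem_span_image ι (hy n)

/-- The rational linear combinations of a sequence. -/
noncomputable def ratCombination (e : ℕ → 𝒲) : (ℕ →₀ ℚ) →+ 𝒲 :=
  (Finsupp.linearCombination ℝ e).toAddMonoidHom.comp
    (Finsupp.mapRange.addMonoidHom (Rat.castHom ℝ).toAddMonoidHom)

lemma ratCombination_single (e : ℕ → 𝒲) (i : ℕ) (q : ℚ) :
    ratCombination e (Finsupp.single i q) = (q : ℝ) • e i := by
  simp [ratCombination]

lemma ratCombination_injective {e : ℕ → 𝒲} (he : LinearIndependent ℝ e) :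
    Function.Injective (ratCombination e) :=
  Function.Injective.comp (g := Finsupp.linearCombination ℝ e) he
    (Finsupp.mapRange_injective _ Rat.cast_zero Rat.cast_injective)

end BlockSequences

/-! ### Approximating a subspace by a rational block sequence -/

section GlidingHump

lemma exists_norm_sub_le_mul_norm {E V : Type*} [AddCommGroup E] [NormedAddCommGroup V] {ι : E →+ V}
    {S : Set E} {u : V} (hu : u ∈ closure (ι '' S)) (hu₀ : u ≠ 0) {ε : ℝ} (hε : 0 < ε) :
    ∃ f ∈ S, f ≠ 0 ∧ ‖ι f - u‖ ≤ ε * ‖ι f‖ := by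
  have hpos := norm_pos_iff.2 hu₀
  obtain ⟨_, ⟨f, hf, rfl⟩, hd⟩ := Metric.mem_closure_iff.1 hu (min (‖u‖ / 2) (ε * (‖u‖ / 2)))
    (by positivity)
  rw [dist_eq_norm, norm_sub_rev, lt_min_iff] at hd
  have hnorm : ‖u‖ / 2 ≤ ‖ι f‖ := by
    have := norm_sub_norm_le u (ι f)
    rw [norm_sub_rev] at this
    linarith
  refine ⟨f, hf, ?_, hd.2.le.trans (by gcongr)⟩
  rintro rfl
  rw [map_zero, norm_zero] at hnorm
  linarith

variable {𝒲 : Type} [NormedAddCommGroup 𝒲] [NormedSpace ℝ 𝒲] {b : ℕ → 𝒲} {Y : Submodule ℝ 𝒲}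

lemma mem_of_mem_closedSpan {S : Set 𝒲} {N : Submodule ℝ 𝒲} (hN : IsClosed (N : Set 𝒲))
    (T : 𝒲 →L[ℝ] 𝒲) (hS : ∀ v ∈ S, T v ∈ N) {u : 𝒲} (hu : u ∈ closedSpan S) : T u ∈ N :=
  Submodule.topologicalClosure_minimal (t := N.comap T.toLinearMap) _ (Submodule.span_le.2 hS)
    (hN.preimage T.continuous) hu

namespace BasisProjections

variable (h : BasisProjections b)
include h

lemma proj_mem_span (N : ℕ) {u : 𝒲} (hu : u ∈ closedSpan (Set.range b)) :
    h.proj N u ∈ Submodule.span ℝ (b '' Set.Iio N) := by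
  have := FiniteDimensional.span_of_finite ℝ ((Set.finite_Iio N).image b)
  refine mem_of_mem_closedSpan (Submodule.closed_of_finiteDimensional _) (h.proj N) ?_ hu
  rintro _ ⟨i, rfl⟩
  rw [h.proj_apply_basis]
  split_ifs with hi
  · exact Submodule.subset_span ⟨i, hi, rfl⟩
  · exact zero_mem _

lemma sub_proj_mem_closedSpan (N : ℕ) {u : 𝒲} (hu : u ∈ closedSpan (Set.range b)) :
    u - h.proj N u ∈ closedSpan (b '' Set.Ici N) := by
  refine mem_of_mem_closedSpan (Submodule.isClosed_topologicalClosure _)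
    (ContinuousLinearMap.id ℝ 𝒲 - h.proj N) ?_ hu
  rintro _ ⟨i, rfl⟩
  rw [_root_.sub_apply, ContinuousLinearMap.id_apply, h.proj_apply_basis]
  split_ifs with hi
  · simp
  · rw [sub_zero]
    exact Submodule.le_topologicalClosure _ (Submodule.subset_span ⟨i, not_lt.1 hi, rfl⟩)

lemma exists_proj_eq_zero (hY : Y ≤ closedSpan (Set.range b)) (hdim : ¬FiniteDimensional ℝ Y)
    (N : ℕ) : ∃ u ∈ Y, u ≠ 0 ∧ h.proj N u = 0 := by
  by_contra! hker
  have := FiniteDimensional.span_of_finite ℝ ((Set.finite_Iio N).image b)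
  let φ : Y →ₗ[ℝ] Submodule.span ℝ (b '' Set.Iio N) :=
    ((h.proj N).toLinearMap.comp Y.subtype).codRestrict _ fun v => h.proj_mem_span N (hY v.2)
  refine hdim (FiniteDimensional.of_injective φ (LinearMap.ker_eq_bot.1 (eq_bot_iff.2 ?_)))
  intro v hv
  by_contra hne
  exact hker v v.2 (by simpa using hne) (congrArg Subtype.val hv)

end BasisProjections

variable {E : Type*} [AddCommGroup E] [Module ℚ E] {ι : E →+ 𝒲} {x : ℕ → E}

lemma mem_closure_image_of_mem_closedSpan {s : Set ℕ} {u : 𝒲}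
    (hu : u ∈ closedSpan ((ι ∘ x) '' s)) :
    u ∈ closure (ι '' (Submodule.span ℚ (x '' s) : Set E)) := by
  refine topologicalClosure_span_image_subset ι _ (Submodule.topologicalClosure_mono
    (Submodule.span_mono ?_) hu)
  rw [Set.image_comp]
  exact Set.image_mono Submodule.subset_span

theorem BasisProjections.exists_blockOf_norm_sub_le (h : BasisProjections (ι ∘ x))
    (hY : Y ≤ closedSpan (Set.range (ι ∘ x))) (hdim : ¬FiniteDimensional ℝ Y) {ε : ℕ → ℝ}
    (hε : ∀ n, 0 < ε n) :
    ∃ z, BlockOf ℚ x z ∧ ∃ t : ℕ → 𝒲, (∀ n, t n ∈ Y) ∧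
      ∀ n, ‖ι (z n) - t n‖ ≤ ε n * ‖ι (z n)‖ := by
  have hstep (N n : ℕ) : ∃ M > N, ∃ f ∈ Submodule.span ℚ (x '' Set.Ico N M), f ≠ 0 ∧
      ∃ u ∈ Y, ‖ι f - u‖ ≤ ε n * ‖ι f‖ := by
    obtain ⟨u, huY, hu₀, hu⟩ := h.exists_proj_eq_zero hY hdim N
    have htail := h.sub_proj_mem_closedSpan N (hY huY)
    rw [hu, sub_zero] at htail
    obtain ⟨f, hf, hf₀, hfu⟩ :=
      exists_norm_sub_le_mul_norm (mem_closure_image_of_mem_closedSpan htail) hu₀ (hε n)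
    obtain ⟨M, hM, hfM⟩ := exists_mem_span_image_Ico hf
    exact ⟨M, hM, f, hfM, hf₀, u, huY, hfu⟩
  choose M hM f hf hf₀ u huY hfu using hstep
  let N : ℕ → ℕ := fun n => Nat.rec 0 (fun n N => M N n) n
  exact ⟨fun n => f (N n) n, ⟨fun n => hf₀ _ _, N, strictMono_nat_of_lt_succ fun n => hM _ _,
    fun n => hf _ _⟩, fun n => u (N n) n, fun n => huY _ _, fun n => hfu _ _⟩

end GlidingHump

/-! ### Ranks of trees -/

section Rank

variable {A : Type} {T : Set (List A)} {β γ : Ordinal.{0}} {s t : List A}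

/-- The rank of `t` in the tree `T` is at least `β`, expressed by the game of extending `t`
within `T` as long as an ordinal clock runs. -/
def RankGE (T : Set (List A)) (β : Ordinal.{0}) (t : List A) : Prop :=
  Survives (· < ·) (fun (_ : Unit) t s => s ∈ T ∧ t <+: s ∧ t ≠ s) β t

lemma RankGE.exists_extension (h : RankGE T β t) (hγ : γ < β) :
    ∃ s ∈ T, t <+: s ∧ t ≠ s ∧ RankGE T γ s := by
  obtain ⟨s, ⟨hs, hts, hne⟩, hrank⟩ := h.exists_move hγ ()
  exact ⟨s, hs, hts, hne, hrank⟩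

lemma RankGE.exists_extension_add_nat (ht : t ∈ T) (m : ℕ) (h : RankGE T (β + m) t) :
    ∃ s ∈ T, t <+: s ∧ t.length + m ≤ s.length ∧ RankGE T β s := by
  induction m generalizing t with
  | zero => exact ⟨t, ht, List.prefix_rfl, le_rfl, by simpa using h⟩
  | succ m ih =>
    obtain ⟨u, hu, htu, hne, hrank⟩ := h.exists_extension (γ := β + m) (by gcongr; simp)
    obtain ⟨s, hs, hus, hlen, hrank⟩ := ih hu hrank
    have hlt : t.length < u.length :=
      htu.length_le.lt_of_ne fun h => hne (htu.eq_of_length h)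
    exact ⟨s, hs, htu.trans hus, by lia, hrank⟩

lemma rankGE_iff_le_rank (s : T) :
    RankGE T β s ↔ ∀ h : Acc (fun t s : T => s.val <+: t.val ∧ s.val ≠ t.val) s, β ≤ h.rank := by
  constructor
  · intro h hs
    induction hs generalizing β with
    | intro s hacc ih =>
      refine le_of_forall_lt fun γ hγ => ?_
      obtain ⟨u, hu, hsu, hne, hrank⟩ := h.exists_extension hγ
      exact (ih ⟨u, hu⟩ ⟨hsu, hne⟩ hrank).trans_lt
        (Acc.rank_lt_of_rel (Acc.intro s hacc) ⟨hsu, hne⟩)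
  · refine fun h => ⟨fun β t => ∃ ht : t ∈ T, ∀ h : Acc _ (⟨t, ht⟩ : T), β ≤ h.rank, ⟨s.2, h⟩, ?_⟩
    rintro β t ⟨ht, hβ⟩ γ hγ -
    by_cases hacc : Acc (fun t s : T => s.val <+: t.val ∧ s.val ≠ t.val) ⟨t, ht⟩
    · have hlt := hγ.trans_le (hβ hacc)
      rw [Acc.rank_eq, Ordinal.lt_iSup_iff] at hlt
      obtain ⟨⟨u, hu⟩, hlt⟩ := hlt
      exact ⟨u, ⟨u.2, hu⟩, u.2, fun _ => Order.lt_succ_iff.1 hlt⟩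
    · obtain ⟨u, hu, hacc⟩ : ∃ u : T, (t <+: u.val ∧ t ≠ u.val) ∧
          ¬Acc (fun t s : T => s.val <+: t.val ∧ s.val ≠ t.val) u := by
        by_contra! hcon
        exact hacc ⟨_, fun u hu => hcon u hu⟩
      exact ⟨u, ⟨u.2, hu⟩, u.2, fun h => absurd h hacc⟩

lemma coe_lt_treeRank_iff (hT : [] ∈ T) : (β : WithTop Ordinal) < treeRank T ↔ RankGE T β [] := by
  let r : T → T → Prop := fun t s => s.val <+: t.val ∧ s.val ≠ t.val
  have hroot (s : T) : s = ⟨[], hT⟩ ∨ r s ⟨[], hT⟩ := by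
    by_cases h : s.val = []
    · exact .inl (Subtype.ext h)
    · exact .inr ⟨List.nil_prefix, Ne.symm h⟩
  rw [rankGE_iff_le_rank ⟨[], hT⟩, treeRank]
  split_ifs with hw
  · have hsup : ⨆ s : T, Order.succ (hw.apply s).rank = Order.succ (hw.apply ⟨[], hT⟩).rank := by
      refine le_antisymm (Ordinal.iSup_le fun s => Order.succ_le_succ ?_)
        (Ordinal.le_iSup (fun s : T => Order.succ (hw.apply s).rank) ⟨[], hT⟩)
      rcases hroot s with rfl | hs
      · exact le_rfl
      · exact (Acc.rank_lt_of_rel (hw.apply ⟨[], hT⟩) hs).le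
    rw [hsup, WithTop.coe_lt_coe, Order.lt_succ_iff]
    exact ⟨fun h _ => h, fun h => h _⟩
  · refine iff_of_true (WithTop.coe_lt_top _) fun hacc => absurd ⟨fun s => ?_⟩ hw
    rcases hroot s with rfl | hs
    exacts [hacc, hacc.inv hs]

end Rank

section EmbIndex

variable {𝒲 : Type} [NormedAddCommGroup 𝒲] [NormedSpace ℝ 𝒲] {β : Ordinal.{0}}
  {x : ℕ → 𝒲} {Y : Set 𝒲}

lemma nil_mem_embTree (x : ℕ → 𝒲) (Y : Set 𝒲) (K : ℝ) : [] ∈ embTree x Y K :=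
  ⟨by simp, fun a => by simp⟩

lemma coe_lt_embIndex_iff :
    (β : WithTop Ordinal) < embIndex x Y ↔ ∃ K : ℝ, 1 ≤ K ∧ RankGE (embTree x Y K) β [] := by
  simp only [← coe_lt_treeRank_iff (nil_mem_embTree x Y _)]
  rw [embIndex]
  split_ifs with htop
  · obtain ⟨K, hK, hrank⟩ := htop
    exact iff_of_true (WithTop.coe_lt_top _) ⟨K, hK, hrank ▸ WithTop.coe_lt_top _⟩
  · have hbdd : BddAbove {o : Ordinal.{0} | ∃ K : ℝ, 1 ≤ K ∧
        (o : WithTop Ordinal) = treeRank (embTree x Y K)} := by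
      refine (Ordinal.bddAbove_of_small (s := Set.range fun K : ℝ =>
        (treeRank (embTree x Y K)).untopD 0)).mono ?_
      rintro o ⟨K, -, ho⟩
      exact ⟨K, by simp [← ho]⟩
    rw [WithTop.coe_lt_coe, lt_csSup_iff' hbdd]
    constructor
    · rintro ⟨o, ⟨K, hK, ho⟩, hβ⟩
      exact ⟨K, hK, ho ▸ WithTop.coe_lt_coe.2 hβ⟩
    · rintro ⟨K, hK, hβ⟩
      obtain ⟨o, ho⟩ := WithTop.ne_top_iff_exists.1 fun h => htop ⟨K, hK, h⟩
      exact ⟨o, ⟨K, hK, ho⟩, WithTop.coe_lt_coe.1 (ho ▸ hβ)⟩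

lemma coe_le_embIndex_iff : (β : WithTop Ordinal) ≤ embIndex x Y ↔
    ∀ γ < β, ∃ K : ℝ, 1 ≤ K ∧ RankGE (embTree x Y K) γ [] := by
  simp only [← coe_lt_embIndex_iff]
  refine ⟨fun h γ hγ => (WithTop.coe_lt_coe.2 hγ).trans_le h,
    fun h => le_of_forall_lt fun c hc => ?_⟩
  obtain ⟨γ, rfl⟩ := WithTop.ne_top_iff_exists.1 (ne_top_of_lt hc)
  exact h γ (WithTop.coe_lt_coe.1 hc)

end EmbIndex

/-! ### Distortion of direct sums and finite-dimensional modifications -/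

section Distortion

variable {V : Type*} [NormedAddCommGroup V] [NormedSpace ℝ V]

omit [NormedSpace ℝ V] in
lemma norm_add_le_mul_norm_add {f f' g g' : V} {C K M : ℝ} (hM : 0 ≤ M) (hK : 0 ≤ K)
    (hg : ‖g'‖ ≤ M * ‖g‖) (hf : ‖f'‖ ≤ K * ‖f‖)
    (h : ‖g‖ ≤ C * ‖g + f‖ ∧ ‖f‖ ≤ (1 + C) * ‖g + f‖) :
    ‖g' + f'‖ ≤ (M * C + K * (1 + C)) * ‖g + f‖ :=
  calc ‖g' + f'‖ ≤ ‖g'‖ + ‖f'‖ := norm_add_le _ _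
    _ ≤ M * ‖g‖ + K * ‖f‖ := add_le_add hg hf
    _ ≤ M * (C * ‖g + f‖) + K * ((1 + C) * ‖g + f‖) := by gcongr; exacts [h.1, h.2]
    _ = (M * C + K * (1 + C)) * ‖g + f‖ := by ring

omit [NormedSpace ℝ V] in
lemma norm_le_two_mul_norm_of_norm_sub_le {u v : V} (h : ‖u - v‖ ≤ 1 / 2 * ‖u‖) :
    ‖u‖ ≤ 2 * ‖v‖ ∧ ‖v‖ ≤ 2 * ‖u‖ := by
  have hge := norm_le_insert' u v
  have hle := norm_le_insert u v
  constructor <;> linarith [norm_nonneg u]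

variable {E : Type*} [AddCommGroup E] [Module ℚ E] {ι : E →+ V} {x z : ℕ → E} {K M K' k l m : ℕ}
  {Γ Γ₀ Γ₁ : Submodule ℚ (E × E)}

lemma Distorts.sup (hx : BasisProjections (ι ∘ x)) (hz : BasisProjections (ι ∘ z))
    (h₀ : Distorts (‖ι ·‖) M Γ₀) (h₁ : Distorts (‖ι ·‖) K Γ₁)
    (hΓ₀ : Γ₀ ≤ (Submodule.span ℚ (x '' Set.Iio k)).prod (Submodule.span ℚ (z '' Set.Iio l)))
    (hΓ₁ : Γ₁ ≤ (tailSpan ℚ x k).prod (tailSpan ℚ z l))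
    (hx' : M * hx.const + K * (1 + hx.const) ≤ K') (hz' : M * hz.const + K * (1 + hz.const) ≤ K') :
    Distorts (‖ι ·‖) K' (Γ₀ ⊔ Γ₁) := by
  intro p hp
  obtain ⟨g, hg, f, hf, rfl⟩ := Submodule.mem_sup.1 hp
  have hsplit {y : ℕ → E} (hy : BasisProjections (ι ∘ y)) {k : ℕ} {g f : E}
      (hg : g ∈ Submodule.span ℚ (y '' Set.Iio k)) (hf : f ∈ tailSpan ℚ y k) :
      ‖ι g‖ ≤ hy.const * ‖ι g + ι f‖ ∧ ‖ι f‖ ≤ (1 + hy.const) * ‖ι g + ι f‖ := by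
    refine hy.norm_add_ge (s := Set.Iio k) (t := Set.Ici k) le_rfl le_rfl ?_ ?_ <;>
      rw [Set.image_comp]
    exacts [map_mem_span_image ι hg, map_mem_span_image ι hf]
  simp only [Prod.fst_add, Prod.snd_add, map_add]
  constructor
  · exact (norm_add_le_mul_norm_add M.cast_nonneg K.cast_nonneg (h₀ g hg).1 (h₁ f hf).1
      (hsplit hz (hΓ₀ hg).2 (hΓ₁ hf).2)).trans (by gcongr)
  · exact (norm_add_le_mul_norm_add M.cast_nonneg K.cast_nonneg (h₀ g hg).2 (h₁ f hf).2
      (hsplit hx (hΓ₀ hg).1 (hΓ₁ hf).1)).trans (by gcongr)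

lemma map_sum_smul (ι : E →+ V) (s : Finset ℕ) (a : ℕ → ℚ) (x : ℕ → E) :
    ι (∑ i ∈ s, a i • x i) = ∑ i ∈ s, (a i : ℝ) • (ι ∘ x) i := by
  rw [map_sum]
  exact Finset.sum_congr rfl fun i _ => by
    rw [Function.comp_apply, ← map_ratCast_smul ι ℚ ℝ, Rat.cast_id]

lemma distorts_span_image_of_norm_le (hx : BasisProjections (ι ∘ x))
    (hz : BasisProjections (ι ∘ z)) {r : ℝ} (hr : 0 ≤ r)
    (hxz : ∀ i < m, ‖ι (x i)‖ ≤ r * ‖ι (z i)‖ ∧ ‖ι (z i)‖ ≤ r * ‖ι (x i)‖)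
    (hx' : m * r * (2 * hx.const) ≤ M) (hz' : m * r * (2 * hz.const) ≤ M) :
    Distorts (‖ι ·‖) M (Submodule.span ℚ ((fun i => (x i, z i)) '' Set.Iio m)) := by
  rw [← Finset.coe_range]
  intro p hp
  obtain ⟨a, rfl⟩ := mem_span_image_iff_exists_sum.1 hp
  simp only [Prod.fst_sum, Prod.snd_sum, Prod.smul_fst, Prod.smul_snd, map_sum_smul]
  exact ⟨(hz.norm_sum_le_mul_norm_sum hr (fun i hi => (hxz i hi).1) _).trans (by gcongr),
    (hx.norm_sum_le_mul_norm_sum hr (fun i hi => (hxz i hi).2) _).trans (by gcongr)⟩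

lemma exists_distorts_span_image (hx : BasisProjections (ι ∘ x)) (hz : BasisProjections (ι ∘ z))
    (m : ℕ) :
    ∃ M : ℕ, Distorts (‖ι ·‖) M (Submodule.span ℚ ((fun i => (x i, z i)) '' Set.Iio m)) := by
  let q (i : ℕ) : ℝ := ‖ι (x i)‖ / ‖ι (z i)‖ + ‖ι (z i)‖ / ‖ι (x i)‖
  have hq (i : ℕ) : 0 ≤ q i := by positivity
  have hxz (i : ℕ) (hi : i < m) : ‖ι (x i)‖ ≤ (∑ i ∈ Finset.range m, q i) * ‖ι (z i)‖ ∧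
      ‖ι (z i)‖ ≤ (∑ i ∈ Finset.range m, q i) * ‖ι (x i)‖ := by
    have hle := Finset.single_le_sum (fun i _ => hq i) (Finset.mem_range.2 hi)
    have hxi : 0 < ‖ι (x i)‖ := norm_pos_iff.2 (hx.ne_zero i)
    have hzi : 0 < ‖ι (z i)‖ := norm_pos_iff.2 (hz.ne_zero i)
    rw [← div_le_iff₀ hzi, ← div_le_iff₀ hxi]
    exact ⟨(le_add_of_nonneg_right (by positivity)).trans hle,
      (le_add_of_nonneg_left (by positivity)).trans hle⟩
  obtain ⟨M, hM⟩ := exists_nat_ge (max (m * (∑ i ∈ Finset.range m, q i) * (2 * hx.const))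
    (m * (∑ i ∈ Finset.range m, q i) * (2 * hz.const)))
  exact ⟨M, distorts_span_image_of_norm_le hx hz (Finset.sum_nonneg fun i _ => hq i) hxz
    ((le_max_left _ _).trans hM) ((le_max_right _ _).trans hM)⟩

end Distortion

section Prepend

variable {V E L : Type*} [NormedAddCommGroup V] [NormedSpace ℝ V] [AddCommGroup E] [Module ℚ E]
  {ι : E →+ V} {lt : L → L → Prop} {a : L} {x z : ℕ → E} {K : ℕ}

omit [Module ℚ E] in
lemma EmbedsFor.mono {R : Type*} [Ring R] [Module R E] {ν : E → ℝ} {U U' T T' : Submodule R E}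
    {Γ : Submodule R (E × E)} (hU : U' ≤ U) (hT : T ≤ T') (h : EmbedsFor ν lt K U T a Γ) :
    EmbedsFor ν lt K U' T' a Γ := by
  refine Survives.simulate (sim := Eq) h rfl ?_
  rintro Γ _ rfl ⟨C, hC, hCU⟩
  exact ⟨⟨C, hC, hCU.trans hU⟩,
    fun Γ' h => ⟨Γ', ⟨h.le, h.range_le.trans hT, h.le_domain, h.distorts⟩, rfl⟩⟩

/-- `x i` is sent to `z i` for `i < m`, and the tail of `x` is embedded by the given strategy. -/
lemma EmbedsFor.of_tailSpan (hx : BasisProjections (ι ∘ x)) (hz : BasisProjections (ι ∘ z)) {m : ℕ}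
    (h : EmbedsFor (‖ι ·‖) lt K (tailSpan ℚ x m) (tailSpan ℚ z m) a ⊥) :
    ∃ K', EmbedsFor (‖ι ·‖) lt K' (tailSpan ℚ x 0) (tailSpan ℚ z 0) a ⊥ := by
  obtain ⟨M, hM⟩ := exists_distorts_span_image hx hz m
  obtain ⟨K', hK'⟩ := exists_nat_ge (max (M * hx.const + K * (1 + hx.const))
    (M * hz.const + K * (1 + hz.const)))
  set Γ₀ := Submodule.span ℚ ((fun i => (x i, z i)) '' Set.Iio m)
  let D := (tailSpan ℚ x m).comap (LinearMap.fst ℚ E E)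
  have hΓ₀_le : Γ₀ ≤ (Submodule.span ℚ (x '' Set.Iio m)).prod (Submodule.span ℚ (z '' Set.Iio m)) :=
    Submodule.span_le.2 <| Set.image_subset_iff.2 fun i hi =>
      ⟨Submodule.subset_span ⟨i, hi, rfl⟩, Submodule.subset_span ⟨i, hi, rfl⟩⟩
  refine ⟨K', Survives.simulate (sim := fun Γ Δ => Δ ≤ Γ₀ ⊔ Γ ⊓ D) h bot_le ?_⟩
  rintro Γ Δ hΔ ⟨C, hC, hCx⟩
  obtain ⟨k, hk⟩ := exists_le_span_image_Iio hC hCx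
  refine ⟨⟨Submodule.span ℚ (x '' Set.Ico m k), Submodule.fg_span ((Set.finite_Ico m k).image x),
    Submodule.span_mono (Set.image_mono fun i hi => hi.1)⟩,
    fun Γ' hΓ' => ⟨Γ₀ ⊔ Γ' ⊓ D, ⟨?_, ?_, ?_, ?_⟩, le_rfl⟩⟩
  · exact hΔ.trans (sup_le_sup_left (inf_le_inf_right _ hΓ'.le) _)
  · rw [Submodule.map_sup]
    refine sup_le ?_ ((Submodule.map_mono inf_le_left).trans
      (hΓ'.range_le.trans (tailSpan_antitone z m.zero_le)))
    rintro _ ⟨p, hp, rfl⟩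
    exact Submodule.span_mono (Set.image_mono fun i _ => i.zero_le) (hΓ₀_le hp).2
  · refine hk.trans (Submodule.span_le.2 ?_)
    rintro _ ⟨i, ⟨-, hik⟩, rfl⟩
    rcases lt_or_ge i m with him | hmi
    · exact ⟨(x i, z i), Submodule.mem_sup_left (Submodule.subset_span ⟨i, him, rfl⟩), rfl⟩
    · obtain ⟨p, hp, hpi⟩ := hΓ'.le_domain (Submodule.subset_span ⟨i, ⟨hmi, hik⟩, rfl⟩)
      refine ⟨p, Submodule.mem_sup_right ⟨hp, ?_⟩, hpi⟩
      exact Submodule.mem_comap.2 (hpi ▸ mem_tailSpan x hmi)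
  · have hD : Γ' ⊓ D ≤ (tailSpan ℚ x m).prod (tailSpan ℚ z m) := fun p hp =>
      ⟨hp.2, hΓ'.range_le ⟨p, hp.1, rfl⟩⟩
    exact hM.sup hx hz (fun p hp => hΓ'.distorts p hp.1) hΓ₀_le hD
      ((le_max_left _ _).trans hK') ((le_max_right _ _).trans hK')

end Prepend

/-! ### From embedding games to embeddings -/

section LinearRelations

variable {𝒲 : Type} [NormedAddCommGroup 𝒲] [NormedSpace ℝ 𝒲] {Λ : Submodule ℝ (𝒲 × 𝒲)}
  {X Y : Submodule ℝ 𝒲} {K : ℝ} {x w : ℕ → 𝒲}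

lemma mem_embTree_of_forall_mem {l : List 𝒲} (hK : 0 < K) (hY : Λ.map (LinearMap.snd ℝ 𝒲 𝒲) ≤ Y)
    (hΛ : ∀ p ∈ Λ, ‖p.1‖ ≤ K * ‖p.2‖ ∧ ‖p.2‖ ≤ K * ‖p.1‖)
    (hl : ∀ i < l.length, (x i, l.getD i 0) ∈ Λ) : l ∈ embTree x Y K := by
  refine ⟨fun v hv => ?_, fun a => ?_⟩
  · obtain ⟨i, hi, rfl⟩ := List.mem_iff_getElem.1 hv
    rw [← List.getD_eq_getElem l 0 hi]
    exact hY ⟨_, hl i hi, rfl⟩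
  · have hsum : ∑ i ∈ Finset.range l.length, a i • (x i, l.getD i 0) ∈ Λ :=
      Submodule.sum_mem _ fun i hi => Submodule.smul_mem _ _ (hl i (Finset.mem_range.1 hi))
    have := hΛ _ hsum
    simp only [Prod.fst_sum, Prod.snd_sum, Prod.smul_mk] at this
    exact ⟨by rw [one_div, inv_mul_le_iff₀ hK]; exact this.2, this.1⟩

lemma linIsoEmbeds_of_le_map_fst (hK : 0 < K) (hX : X ≤ Λ.map (LinearMap.fst ℝ 𝒲 𝒲))
    (hY : Λ.map (LinearMap.snd ℝ 𝒲 𝒲) ≤ Y)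
    (hΛ : ∀ p ∈ Λ, ‖p.1‖ ≤ K * ‖p.2‖ ∧ ‖p.2‖ ≤ K * ‖p.1‖) : LinIsoEmbeds X Y := by
  have hgraph (p : 𝒲 × 𝒲) (hp : p ∈ Λ) (hp₀ : p.1 = 0) : p.2 = 0 := by
    simpa [hp₀] using (hΛ p hp).2
  have hmem (v : X) := Submodule.mem_graph_toLinearPMap hgraph (Submodule.inclusion hX v)
  refine ⟨Λ.toLinearPMap.toFun ∘ₗ Submodule.inclusion hX, fun v => hY ⟨_, hmem v, rfl⟩,
    K⁻¹, K, inv_pos.2 hK, fun v => ?_⟩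
  rw [inv_mul_le_iff₀ hK]
  exact hΛ _ (hmem v)

variable [CompleteSpace 𝒲]

lemma isClosed_map_fst (hcl : IsClosed (Λ : Set (𝒲 × 𝒲)))
    (hΛ : ∀ p ∈ Λ, ‖p.2‖ ≤ K * ‖p.1‖) :
    IsClosed (Λ.map (LinearMap.fst ℝ 𝒲 𝒲) : Set 𝒲) := by
  have : CompleteSpace Λ := hcl.completeSpace_coe
  let φ : Λ →L[ℝ] 𝒲 := (ContinuousLinearMap.fst ℝ 𝒲 𝒲).comp Λ.subtypeL
  have hφ : AntilipschitzWith (max 1 K.toNNReal) φ :=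
    ContinuousLinearMap.antilipschitz_of_bound φ fun p =>
      max_le (le_mul_of_one_le_left (norm_nonneg _) (le_max_left _ _)) <|
        (hΛ p p.2).trans <| by
          rw [NNReal.coe_max]
          exact mul_le_mul_of_nonneg_right (le_max_of_le_right (Real.le_coe_toNNReal K))
            (norm_nonneg _)
  convert hφ.isClosed_range φ.uniformContinuous
  ext v
  simp [φ]

theorem linIsoEmbeds_of_seqEquiv (hY : IsClosed (Y : Set 𝒲)) (hK : 0 < K) (hw : ∀ n, w n ∈ Y)
    (h : ∀ n, SeqEquiv K n w x) : LinIsoEmbeds (closedSpan (Set.range x)) Y := by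
  let Λ := (Submodule.span ℝ (Set.range fun i => (x i, w i))).topologicalClosure
  have hmem (i : ℕ) : (x i, w i) ∈ Λ :=
    Submodule.le_topologicalClosure _ (Submodule.subset_span ⟨i, rfl⟩)
  have hΛ (p) (hp : p ∈ Λ) : ‖p.1‖ ≤ K * ‖p.2‖ ∧ ‖p.2‖ ≤ K * ‖p.1‖ := by
    refine closure_minimal ?_ (isClosed_setOf_norm_le K) hp
    intro q hq
    rw [SetLike.mem_coe, ← tailSpan_zero] at hq
    obtain ⟨n, -, hq⟩ := exists_mem_span_image_Ico hq
    rw [← Finset.coe_Ico, mem_span_image_iff_exists_sum, ← Finset.range_eq_Ico] at hq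
    obtain ⟨a, rfl⟩ := hq
    obtain ⟨hle, hge⟩ := h n a
    rw [one_div, inv_mul_le_iff₀ hK] at hle
    simpa only [Prod.fst_sum, Prod.snd_sum, Set.mem_ofPred_eq] using ⟨hge, hle⟩
  refine linIsoEmbeds_of_le_map_fst hK ?_ ?_ hΛ
  · refine Submodule.topologicalClosure_minimal _ (Submodule.span_le.2 ?_)
      (isClosed_map_fst (Submodule.isClosed_topologicalClosure _) fun p hp => (hΛ p hp).2)
    rintro _ ⟨i, rfl⟩
    exact ⟨_, hmem i, rfl⟩
  · refine Submodule.map_le_iff_le_comap.2 (Submodule.topologicalClosure_minimal _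
      (Submodule.span_le.2 ?_) (hY.preimage continuous_snd))
    rintro _ ⟨i, rfl⟩
    exact hw i

end LinearRelations

section Appending

variable {L A : Type*} {lt : L → L → Prop} {a : L} {T : Set (List A)}

/-- The second player can extend the empty list one term at a time within `T`, for as long as the
clock `a` runs. -/
def GrowsFor (lt : L → L → Prop) (T : Set (List A)) (a : L) : Prop :=
  Survives lt (fun (_ : Unit) l l' => l' ∈ T ∧ ∃ v, l' = l ++ [v]) a []

lemma GrowsFor.rankGE {A : Type} {T : Set (List A)} {β : Ordinal.{0}}
    (h : GrowsFor (· < ·) T β) : RankGE T β [] := by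
  refine Survives.simulate (sim := Eq) h rfl ?_
  rintro l _ rfl _
  refine ⟨(), fun l' ⟨hl', v, hv⟩ => ⟨l', ⟨hl', ?_, ?_⟩, rfl⟩⟩ <;> simp [hv]

lemma GrowsFor.exists_branch (hT : [] ∈ T) (h : GrowsFor (fun _ _ : Unit => True) T ()) :
    ∃ w : ℕ → A, ∀ n, (List.range n).map w ∈ T := by
  obtain ⟨S, hS, hstep⟩ := h
  choose next hnext using fun l : {l // S () l} => hstep () l l.2 () trivial ()
  let seq (n : ℕ) : {l // S () l} := (fun l => ⟨next l, (hnext l).2⟩)^[n] ⟨[], hS⟩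
  have hseq (n : ℕ) : (seq (n + 1)).1 = next (seq n) := by
    simp only [seq, Function.iterate_succ_apply']
  choose v hv using fun l => (hnext l).1.2
  have hlist (n : ℕ) : (List.range n).map (fun i => v (seq i)) = (seq n).1 := by
    induction n with
    | zero => rfl
    | succ n ih => rw [List.range_succ, List.map_append, ih, hseq, hv]; rfl
  refine ⟨fun i => v (seq i), fun n => ?_⟩
  rw [hlist]
  cases n with
  | zero => exact hT
  | succ n => rw [hseq]; exact (hnext _).1.1

end Appending

section Realization

variable {𝒲 : Type} [NormedAddCommGroup 𝒲] [NormedSpace ℝ 𝒲] {E L : Type*} [AddCommGroup E]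
  [Module ℚ E] {ι τ : E →+ 𝒲} {x z : ℕ → E} {Y : Submodule ℝ 𝒲} {K : ℕ} {lt : L → L → Prop} {a : L}
  {Γ Γ' : Submodule ℚ (E × E)}

theorem BasisProjections.exists_blockOf_addHom (h : BasisProjections (ι ∘ x))
    (hι : Function.Injective ι) (hY : Y ≤ closedSpan (Set.range (ι ∘ x)))
    (hdim : ¬FiniteDimensional ℝ Y) : ∃ z, BlockOf ℚ x z ∧ ∃ τ : E →+ 𝒲,
      ∀ f ∈ tailSpan ℚ z 0, τ f ∈ Y ∧ ‖ι f‖ ≤ 2 * ‖τ f‖ ∧ ‖τ f‖ ≤ 2 * ‖ι f‖ := by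
  have hC := h.const_pos
  obtain ⟨z, hxz, t, htY, ht⟩ := h.exists_blockOf_norm_sub_le hY hdim
    (ε := fun i => (1 / 2) / (4 * h.const) * (1 / 2) ^ i) fun i => by positivity
  obtain ⟨hz, hconst⟩ := BasisProjections.exists_of_blockOf h (hxz.map hι)
  obtain ⟨Φ, hΦ⟩ := LinearMap.exists_extend ((Module.Basis.span hz.linearIndependent).constr ℝ t)
  have hΦz (i : ℕ) : Φ ((ι ∘ z) i) = t i := by
    rw [← (Module.Basis.span hz.linearIndependent).constr_basis ℝ t i, ← hΦ,
      LinearMap.comp_apply, Submodule.subtype_apply, Module.Basis.span_apply]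
  refine ⟨z, hxz, Φ.toAddMonoidHom.comp ι, fun f hf => ?_⟩
  obtain ⟨n, -, hf⟩ := exists_mem_span_image_Ico hf
  rw [← Finset.coe_Ico, mem_span_image_iff_exists_sum, ← Finset.range_eq_Ico] at hf
  obtain ⟨a, rfl⟩ := hf
  have hdiff := hz.norm_sum_sub_sum_le (n := n) (ι ∘ z) t (η := 1 / 2) (by norm_num)
    (fun i _ => hconst ▸ ht i) fun i => a i
  have hΦsum : Φ (∑ i ∈ Finset.range n, (a i : ℝ) • (ι ∘ z) i) =
      ∑ i ∈ Finset.range n, (a i : ℝ) • t i := by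
    simp only [map_sum, map_smul, hΦz]
  rw [AddMonoidHom.comp_apply, map_sum_smul, LinearMap.toAddMonoidHom_coe, hΦsum]
  exact ⟨Submodule.sum_mem _ fun i _ => Submodule.smul_mem _ _ (htY i),
    norm_le_two_mul_norm_of_norm_sub_le hdiff⟩

lemma ExtendsOver.exists_mem_span_image {M : ℕ} {ν : E → ℝ} {T : Submodule ℚ E} {v : 𝒲}
    (h : ExtendsOver ν K T (Submodule.span ℚ (x '' Set.Iio M)) Γ Γ')
    (hv : v ∈ Submodule.span ℝ ((ι ∘ x) '' Set.Iio M)) :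
    ∃ w, (v, w) ∈ Submodule.span ℝ (ι.prodMap τ '' Γ') := by
  have hle : Submodule.span ℝ ((ι ∘ x) '' Set.Iio M) ≤
      (Submodule.span ℝ (ι.prodMap τ '' Γ')).map (LinearMap.fst ℝ 𝒲 𝒲) := by
    refine Submodule.span_le.2 ?_
    rintro _ ⟨i, hi, rfl⟩
    obtain ⟨p, hp, hpx⟩ := h.le_domain (Submodule.subset_span ⟨i, hi, rfl⟩)
    exact ⟨ι.prodMap τ p, Submodule.subset_span ⟨p, hp, rfl⟩, congrArg ι hpx⟩
  obtain ⟨p, hp, rfl⟩ := hle hv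
  exact ⟨p.2, hp⟩

lemma mem_embTree_of_mem_span_image {u : ℕ → 𝒲} {l : List 𝒲} (hΓ : Distorts (‖ι ·‖) K Γ)
    (hrange : Γ.map (LinearMap.snd ℚ E E) ≤ tailSpan ℚ z 0)
    (hτ : ∀ f ∈ tailSpan ℚ z 0, τ f ∈ Y ∧ ‖ι f‖ ≤ 2 * ‖τ f‖ ∧ ‖τ f‖ ≤ 2 * ‖ι f‖)
    (hl : ∀ i < l.length, (u i, l.getD i 0) ∈ Submodule.span ℝ (ι.prodMap τ '' Γ)) :
    l ∈ embTree u Y (2 * K + 1) := by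
  refine mem_embTree_of_forall_mem (by positivity) ?_ ?_ hl
  · refine Submodule.map_le_iff_le_comap.2 (Submodule.span_le.2 ?_)
    rintro _ ⟨p, hp, rfl⟩
    exact (hτ _ (hrange ⟨p, hp, rfl⟩)).1
  · refine norm_le_of_mem_span_image ι τ fun p hp => ?_
    obtain ⟨-, hle, hge⟩ := hτ _ (hrange ⟨p, hp, rfl⟩)
    simp only [LinearMap.snd_apply] at hle hge
    constructor
    · calc ‖ι p.1‖ ≤ K * ‖ι p.2‖ := (hΓ p hp).1
        _ ≤ K * (2 * ‖τ p.2‖) := by gcongr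
        _ ≤ (2 * K + 1) * ‖τ p.2‖ := by linarith [norm_nonneg (τ p.2)]
    · calc ‖τ p.2‖ ≤ 2 * ‖ι p.2‖ := hge
        _ ≤ 2 * (K * ‖ι p.1‖) := by gcongr; exact (hΓ p hp).2
        _ ≤ (2 * K + 1) * ‖ι p.1‖ := by linarith [norm_nonneg (ι p.1)]

lemma EmbedsFor.growsFor {u : ℕ → 𝒲}
    (h : EmbedsFor (‖ι ·‖) lt K (tailSpan ℚ x 0) (tailSpan ℚ z 0) a ⊥)
    (hτ : ∀ f ∈ tailSpan ℚ z 0, τ f ∈ Y ∧ ‖ι f‖ ≤ 2 * ‖τ f‖ ∧ ‖τ f‖ ≤ 2 * ‖ι f‖)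
    (hu : ∀ n, u n ∈ Submodule.span ℝ (Set.range (ι ∘ x))) :
    GrowsFor lt (embTree u Y (2 * K + 1)) a := by
  refine Survives.simulate (sim := fun (Γ : Submodule ℚ (E × E)) (l : List 𝒲) =>
    ∀ i < l.length, (u i, l.getD i 0) ∈ Submodule.span ℝ (ι.prodMap τ '' Γ)) h (by simp) ?_
  intro Γ l hl _
  have hul := hu l.length
  rw [← tailSpan_zero] at hul
  obtain ⟨M, -, hM⟩ := exists_mem_span_image_Ico hul
  refine ⟨⟨Submodule.span ℚ (x '' Set.Iio M), Submodule.fg_span ((Set.finite_Iio M).image x),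
    Submodule.span_mono (Set.image_mono fun i _ => i.zero_le)⟩, fun Γ' hΓ' => ?_⟩
  obtain ⟨w, hw⟩ := hΓ'.exists_mem_span_image (τ := τ)
    (Submodule.span_mono (Set.image_mono fun i hi => hi.2) hM)
  have hl' : ∀ i < (l ++ [w]).length,
      (u i, (l ++ [w]).getD i 0) ∈ Submodule.span ℝ (ι.prodMap τ '' Γ') := by
    intro i hi
    rw [List.length_append, List.length_singleton, Nat.lt_succ_iff_lt_or_eq] at hi
    rcases hi with hi | rfl
    · rw [List.getD_append _ _ _ _ hi]
      exact Submodule.span_mono (Set.image_mono hΓ'.le) (hl i hi)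
    · simpa using hw
  exact ⟨l ++ [w], ⟨mem_embTree_of_mem_span_image hΓ'.distorts hΓ'.range_le hτ hl', w, rfl⟩, hl'⟩

theorem isAlphaMinimal_of_embedsFor {α : Ordinal.{0}} (hx : BasisProjections (ι ∘ x))
    (hι : Function.Injective ι) (h : ∀ γ < α, ∀ z, BlockOf ℚ x z →
      ∃ K, EmbedsFor (‖ι ·‖) (· < ·) K (tailSpan ℚ x 0) (tailSpan ℚ z 0) γ ⊥) :
    IsAlphaMinimal (ι ∘ x) α := by
  intro u hu Y hY hdim
  obtain ⟨z, hxz, τ, hτ⟩ := hx.exists_blockOf_addHom hι hY hdim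
  obtain ⟨-, N, -, hu⟩ := isBlockSeq_iff_blockOf.1 hu
  refine coe_le_embIndex_iff.2 fun γ hγ => ?_
  obtain ⟨K, hK⟩ := h γ hγ z hxz
  exact ⟨2 * K + 1, by linarith [(K.cast_nonneg : (0 : ℝ) ≤ K)], (hK.growsFor hτ fun n =>
    Submodule.span_mono (Set.image_subset_range _ _) (hu n)).rankGE⟩

theorem isMinimalSpace_of_embedsFor [CompleteSpace 𝒲] (hx : BasisProjections (ι ∘ x))
    (hι : Function.Injective ι) (h : ∀ z, BlockOf ℚ x z →
      ∃ K, EmbedsFor (‖ι ·‖) (fun _ _ : Unit => True) K (tailSpan ℚ x 0) (tailSpan ℚ z 0) () ⊥) :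
    IsMinimalSpace (closedSpan (Set.range (ι ∘ x))) := by
  intro Y hY hYcl hdim
  obtain ⟨z, hxz, τ, hτ⟩ := hx.exists_blockOf_addHom hι hY hdim
  obtain ⟨K, hK⟩ := h z hxz
  obtain ⟨w, hw⟩ := (hK.growsFor hτ fun n =>
    Submodule.subset_span (Set.mem_range_self n)).exists_branch (nil_mem_embTree _ _ _)
  refine linIsoEmbeds_of_seqEquiv hYcl (K := 2 * K + 1) (w := w) (by positivity)
    (fun n => (hw (n + 1)).1 _ (List.mem_map_of_mem (List.mem_range.2 n.lt_succ_self)))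
    fun n a => ?_
  have hsum : ∑ i ∈ Finset.range n, a i • ((List.range n).map w).getD i 0 =
      ∑ i ∈ Finset.range n, a i • w i :=
    Finset.sum_congr rfl fun i hi => by simp [Finset.mem_range.1 hi]
  simpa only [List.length_map, List.length_range, hsum] using (hw n).2 a

end Realization

lemma BasisProjections.not_finiteDimensional_closedSpan {𝒲 : Type} [NormedAddCommGroup 𝒲]
    [NormedSpace ℝ 𝒲] {b : ℕ → 𝒲} (h : BasisProjections b) :
    ¬FiniteDimensional ℝ (closedSpan (Set.range b)) := by
  intro hfin
  have hmem (i : ℕ) : b i ∈ closedSpan (Set.range b) :=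
    Submodule.le_topologicalClosure _ (Submodule.subset_span ⟨i, rfl⟩)
  have hindep : LinearIndependent ℝ fun i => (⟨b i, hmem i⟩ : closedSpan (Set.range b)) :=
    .of_comp (closedSpan (Set.range b)).subtype h.linearIndependent
  exact Infinite.not_finite hindep.finite

/-! ### From countable ordinal clocks to infinite games -/

section CountableOrdinals

open scoped Ordinal

lemma exists_forall_lt_omega_one {I : Type*} [Countable I] {P : I → Ordinal.{0} → Prop}
    (hanti : ∀ i β γ, γ ≤ β → P i β → P i γ) (h : ∀ β < ω₁, ∃ i, P i β) :
    ∃ i, ∀ β < ω₁, P i β := by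
  by_contra! hcon
  choose f hf hP using hcon
  obtain ⟨i, hi⟩ := h _ (Ordinal.iSup_lt_omega_one hf)
  exact hP i (hanti i _ _ (Ordinal.le_iSup f i) hi)

lemma countable_Iic_of_lt_omega_one {γ : Ordinal.{0}} (h : γ < ω₁) : (Set.Iic γ).Countable := by
  have hcard : (Order.succ γ).card ≤ Cardinal.aleph0 := by
    rw [Cardinal.card_le_iff, Cardinal.succ_aleph0, Cardinal.ord_aleph]
    exact (Cardinal.isSuccLimit_omega 1).succ_lt h
  rw [← Order.Iio_succ, ← Cardinal.le_aleph0_iff_set_countable, Cardinal.mk_Iio_ordinal,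
    ← Cardinal.lift_aleph0.{1, 0}, Cardinal.lift_le]
  exact hcard

end CountableOrdinals

section Fusion

open scoped Ordinal

variable {R E : Type*} [Ring R] [AddCommGroup E] [Module R E] {ν : E → ℝ} {K : ℕ} {x : ℕ → E}
  {β γ : Ordinal.{0}} {p : Position R E} {C : Submodule R E} {i n : ℕ}

/-- A block sequence `y` of `x`, with its supports recorded by `N`, satisfies the condition `t`:
the first component of `t` lists triples `(i, y i, N i)`, and the second one lists positions from
which the second player wins the asymptotic game for embedding `y`. -/
structure Satisfies (ν : E → ℝ) (K : ℕ) (x : ℕ → E) (β : Ordinal.{0})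
    (t : Set (ℕ × E × ℕ) × Set (Position R E)) (y : ℕ → E) (N : ℕ → ℕ) : Prop where
  ne_zero : ∀ n, y n ≠ 0
  strictMono : StrictMono N
  mem_span : ∀ n, y n ∈ Submodule.span R (x '' Set.Ico (N n) (N (n + 1)))
  subset_range : t.1 ⊆ Set.range fun i => (i, y i, N i)
  wins : ∀ p ∈ t.2, WinsAsymptotic ν (· < ·) K (tailSpan R y 0) (tailSpan R x) β p

lemma Satisfies.anti {t : Set (ℕ × E × ℕ) × Set (Position R E)} {y : ℕ → E} {N : ℕ → ℕ}
    (h : Satisfies ν K x β t y N) (hγ : γ ≤ β) : Satisfies ν K x γ t y N :=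
  { h with wins := fun p hp => (h.wins p hp).anti hγ }

variable (R) in
/-- The forcing conditions of the fusion argument: those satisfiable for every countable clock. -/
abbrev FusionCondition (ν : E → ℝ) (K : ℕ) (x : ℕ → E) :=
  {t : Set (ℕ × E × ℕ) × Set (Position R E) // ∀ β < ω₁, ∃ y N, Satisfies ν K x β t y N}

namespace FusionCondition

variable {t : FusionCondition R ν K x}

/-- The condition `t` decides the `i`-th term. -/
def Decides (t : FusionCondition R ν K x) (i : ℕ) : Prop :=
  ∃ v n, (i, v, n) ∈ t.1.1

/-- The span of the terms listed in `t`. -/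
def span (t : FusionCondition R ν K x) : Submodule R E :=
  Submodule.span R {v | ∃ i n, (i, v, n) ∈ t.1.1}

lemma exists_ge_decides [Countable E] (t : FusionCondition R ν K x) (i : ℕ) :
    ∃ t' ≥ t, t'.Decides i := by
  obtain ⟨⟨v, n⟩, h⟩ := exists_forall_lt_omega_one (I := E × ℕ)
    (P := fun q β => ∃ y N, Satisfies ν K x β (insert (i, q) t.1.1, t.1.2) y N)
    (fun q β γ hγ ⟨y, N, h⟩ => ⟨y, N, h.anti hγ⟩) fun β hβ => by
      obtain ⟨y, N, h⟩ := t.2 β hβ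
      exact ⟨(y i, N i), y, N,
        { h with subset_range := Set.insert_subset ⟨i, rfl⟩ h.subset_range }⟩
  exact ⟨⟨_, h⟩, ⟨Set.subset_insert _ _, le_rfl⟩, v, n, Set.mem_insert _ _⟩

lemma exists_ge_answers [Countable E] (hp : p ∈ t.1.2) (hC : C.FG) (hCt : C ≤ t.span) (n : ℕ) :
    ∃ t' ≥ t, ∃ q ∈ t'.1.2, Answers ν K (tailSpan R x n) C p q := by
  obtain ⟨q, h⟩ := exists_forall_lt_omega_one (I := Position R E)
    (P := fun q β => Answers ν K (tailSpan R x n) C p q ∧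
      ∃ y N, Satisfies ν K x β (t.1.1, insert q t.1.2) y N)
    (fun q β γ hγ ⟨hq, y, N, h⟩ => ⟨hq, y, N, h.anti hγ⟩) fun β hβ => by
      obtain ⟨y, N, h⟩ := t.2 (Order.succ β) ((Cardinal.isSuccLimit_omega 1).succ_lt hβ)
      have hCy : C ≤ tailSpan R y 0 := by
        refine hCt.trans (Submodule.span_le.2 ?_)
        rintro v ⟨i, n, hi⟩
        obtain ⟨j, hj⟩ := h.subset_range hi
        simp only [Prod.mk.injEq] at hj
        exact hj.2.1 ▸ mem_tailSpan y j.zero_le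
      obtain ⟨q, hq, hwin⟩ := (h.wins p hp).exists_move (Order.lt_succ β) (n, ⟨C, hC, hCy⟩)
      have h' := h.anti (Order.le_succ β)
      exact ⟨q, hq, y, N, { h' with wins := Set.forall_mem_insert.2 ⟨hwin, h'.wins⟩ }⟩
  exact ⟨⟨_, fun β hβ => (h β hβ).2⟩, ⟨le_rfl, Set.subset_insert _ _⟩, q, Set.mem_insert _ _,
    (h 0 (Ordinal.omega_pos 1)).1⟩

variable (R ν K x) in
/-- Those conditions which decide the `i`-th term, respectively those which contain an answer to a
challenge or have no extension at which the challenge makes sense. -/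
def dense [Countable E] :
    ℕ ⊕ (ℕ × Position R E × {C : Submodule R E // C.FG}) → Order.Cofinal (FusionCondition R ν K x)
  | .inl i => ⟨{t | t.Decides i}, fun t => (t.exists_ge_decides i).imp fun _ h => h.symm⟩
  | .inr (n, p, C) =>
    { carrier := {t | (∃ q ∈ t.1.2, Answers ν K (tailSpan R x n) C p q) ∨
        ∀ t' ≥ t, p ∈ t'.1.2 → ¬C.1 ≤ t'.span}
      isCofinal := fun t => by
        by_cases h : ∃ t' ≥ t, p ∈ t'.1.2 ∧ C.1 ≤ t'.span
        · obtain ⟨t', ht', hp, hC⟩ := h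
          obtain ⟨t'', ht'', hq⟩ := exists_ge_answers hp C.2 hC n
          exact ⟨t'', .inl hq, ht'.trans ht''⟩
        · push Not at h
          exact ⟨t, .inr h, le_rfl⟩ }

end FusionCondition

theorem winsForBlock_of_ideal [Countable E] (I : Order.Ideal (FusionCondition R ν K x))
    (hmeet : ∀ i, ∃ t ∈ FusionCondition.dense R ν K x i, t ∈ I) (hbot : ∃ t ∈ I, ⊥ ∈ t.1.2) :
    WinsForBlock ν (fun _ _ : Unit => True) K () (⊥ : Position R E) x := by
  choose t htmem htI using fun i => hmeet (.inl i)
  choose y N hyN using htmem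
  have hcommon (k : ℕ) : ∃ t ∈ I, ∀ i < k, (i, y i, N i) ∈ t.1.1 := by
    induction k with
    | zero => exact ⟨t 0, htI 0, by simp⟩
    | succ k ih =>
      obtain ⟨t', ht', h⟩ := ih
      obtain ⟨t'', ht'', hle, hle'⟩ := I.directed _ ht' _ (htI k)
      refine ⟨t'', ht'', fun i hi => ?_⟩
      rcases Nat.lt_succ_iff_lt_or_eq.1 hi with hi | rfl
      exacts [hle.1 (h i hi), hle'.1 (hyN i)]
  have hblock (n : ℕ) : y n ≠ 0 ∧ N n < N (n + 1) ∧
      y n ∈ Submodule.span R (x '' Set.Ico (N n) (N (n + 1))) := by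
    obtain ⟨t', -, ht'⟩ := hcommon (n + 2)
    obtain ⟨y', N', h⟩ := t'.2 0 (Ordinal.omega_pos 1)
    have heq (i) (hi : i < n + 2) : y' i = y i ∧ N' i = N i := by
      obtain ⟨j, hj⟩ := h.subset_range (ht' i hi)
      simp only [Prod.mk.injEq] at hj
      obtain ⟨rfl, hj⟩ := hj
      exact hj
    rw [← (heq n (by omega)).1, ← (heq n (by omega)).2, ← (heq (n + 1) (by omega)).2]
    exact ⟨h.ne_zero n, h.strictMono n.lt_succ_self, h.mem_span n⟩
  refine ⟨y, ⟨fun n => (hblock n).1, N, strictMono_nat_of_lt_succ fun n => (hblock n).2.1,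
    fun n => (hblock n).2.2⟩, fun _ p => ∃ t ∈ I, p ∈ t.1.2, hbot, ?_⟩
  rintro _ p ⟨t₁, ht₁, hp⟩ _ - ⟨n, C, hC, hCy⟩
  obtain ⟨k, hk⟩ := exists_le_span_image_Iio hC hCy
  obtain ⟨t₂, ht₂, hk'⟩ := hcommon k
  obtain ⟨t₃, ht₃, ht₃I⟩ := hmeet (.inr (n, p, ⟨C, hC⟩))
  obtain ⟨t₄, ht₄, h₁, h₂⟩ := I.directed _ ht₁ _ ht₂
  obtain ⟨t₅, -, h₄, h₃⟩ := I.directed _ ht₄ _ ht₃I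
  rcases ht₃ with ⟨q, hq, hans⟩ | hno
  · exact ⟨q, hans, t₃, ht₃I, hq⟩
  · refine absurd (hk.trans (Submodule.span_mono ?_)) (hno t₅ h₃ (h₄.2 (h₁.2 hp)))
    rintro _ ⟨i, ⟨-, hi⟩, rfl⟩
    exact ⟨i, N i, h₄.1 (h₂.1 (hk' i hi))⟩

theorem exists_winsForBlock_of_forall_lt_omega_one [Countable E]
    (h : ∀ β < (ω₁ : Ordinal.{0}), ∃ K, WinsForBlock ν (· < ·) K β (⊥ : Position R E) x) :
    ∃ K, WinsForBlock ν (fun _ _ : Unit => True) K () (⊥ : Position R E) x := by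
  obtain ⟨K, hK⟩ := exists_forall_lt_omega_one
    (P := fun (K : ℕ) β => WinsForBlock ν (· < ·) K β (⊥ : Position R E) x)
    (fun K β γ hγ ⟨y, hy, hwin⟩ => ⟨y, hy, hwin.anti hγ⟩) h
  have hsat (β) (hβ : β < ω₁) : ∃ y N, Satisfies ν K x β (∅, {(⊥ : Position R E)}) y N := by
    obtain ⟨y, ⟨hy, N, hN, hspan⟩, hwin⟩ := hK β hβ
    exact ⟨y, N, hy, hN, hspan, Set.empty_subset _, by rintro _ rfl; exact hwin⟩
  let t₀ : FusionCondition R ν K x := ⟨_, hsat⟩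
  have := Encodable.ofCountable (ℕ ⊕ (ℕ × Position R E × {C : Submodule R E // C.FG}))
  refine ⟨K, winsForBlock_of_ideal (Order.idealOfCofinals t₀ (FusionCondition.dense R ν K x))
    (Order.cofinal_meets_idealOfCofinals t₀ _) ⟨t₀, Order.mem_idealOfCofinals t₀ _, rfl⟩⟩

end Fusion

/-! ### Forgetting the vectors already used -/

section PositionMap

variable {R E : Type*} [Ring R] [AddCommGroup E] [Module R E] {ν : E → ℝ} {K M : ℕ}
  {T V C : Submodule R E} {Γ Γ' : Submodule R (E × E)} {p q : Position R E} {ρ : E →ₗ[R] E}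

lemma Distorts.anti {Γ Γ' : Submodule R (E × E)} (h : Distorts ν K Γ') (hΓ : Γ ≤ Γ') :
    Distorts ν K Γ := fun p hp => h p (hΓ hp)

/-- Moving the target vectors of a position by a linear map. -/
def Position.map (ρ : E →ₗ[R] E) (p : Position R E) : Position R E :=
  ⟨p.rel.map (LinearMap.id.prodMap ρ), p.space.map ρ, p.rel_fg.map _, p.space_fg.map _⟩

lemma map_eq_self_of_le_span {s : Set E} (h : ∀ v ∈ s, ρ v = v) (hT : T ≤ Submodule.span R s) :
    T.map ρ = T := by
  have hρ := LinearMap.eqOn_span (f := ρ) (g := LinearMap.id) h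
  exact SetLike.coe_injective ((Set.image_congr fun v hv => hρ (hT hv)).trans (Set.image_id _))

lemma ExtendsOver.map (hρ : Distorts ν M (T.map (LinearMap.id.prod ρ)))
    (h : ExtendsOver ν K T C Γ Γ') :
    ExtendsOver ν (K * M) (T.map ρ) C (Γ.map (LinearMap.id.prodMap ρ))
      (Γ'.map (LinearMap.id.prodMap ρ)) where
  le := Submodule.map_mono h.le
  range_le := by
    rintro _ ⟨_, ⟨p, hp, rfl⟩, rfl⟩
    exact ⟨p.2, h.range_le ⟨p, hp, rfl⟩, rfl⟩
  le_domain := fun c hc => by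
    obtain ⟨p, hp, rfl⟩ := h.le_domain hc
    exact ⟨_, ⟨p, hp, rfl⟩, rfl⟩
  distorts := by
    rintro _ ⟨p, hp, rfl⟩
    exact h.distorts.relComp hρ _ ⟨p.2, hp, p.2, h.range_le ⟨p, hp, rfl⟩, rfl⟩

lemma Answers.map (hρ : Distorts ν M (q.space.map (LinearMap.id.prod ρ)))
    (h : Answers ν K V C p q) : Answers ν (K * M) (V.map ρ) C (p.map ρ) (q.map ρ) := by
  obtain ⟨⟨F, hFV, hF, hq⟩, hext⟩ := h
  exact ⟨⟨F.map ρ, Submodule.map_mono hFV, hF.map ρ,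
    (congrArg (Submodule.map ρ) hq).trans (Submodule.map_sup _ _ _)⟩, hext.map hρ⟩

lemma WinsAsymptotic.map {L : Type*} {lt : L → L → Prop} {a : L} {U S : Submodule R E}
    {V : ℕ → Submodule R E} (hρ : Distorts ν M (S.map (LinearMap.id.prod ρ)))
    (hV : ∀ n, ∃ k, V k ≤ S ∧ (V k).map ρ ≤ V n) (hp : p.space ≤ S)
    (h : WinsAsymptotic ν lt K U V a p) : WinsAsymptotic ν lt (K * M) U V a (p.map ρ) := by
  refine Survives.simulate (sim := fun p p' => p' = p.map ρ ∧ p.space ≤ S) h ⟨rfl, hp⟩ ?_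
  rintro p _ ⟨rfl, hp⟩ ⟨n, C⟩
  obtain ⟨k, hkS, hkn⟩ := hV n
  refine ⟨(k, C), fun q hq => ?_⟩
  have hqS : q.space ≤ S := by
    obtain ⟨⟨F, hF, -, hqF⟩, -⟩ := hq
    exact hqF ▸ sup_le hp (hF.trans hkS)
  exact ⟨q.map ρ, (hq.map (hρ.anti (Submodule.map_mono hqS))).mono hkn, rfl, hqS⟩

end PositionMap

lemma exists_linearMap_apply_eq {I F V W : Type*} [DivisionRing F] [AddCommGroup V] [AddCommGroup W]
    [Module F V] [Module F W] {x : I → V} (h : LinearIndependent F x) (w : I → W) :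
    ∃ ρ : V →ₗ[F] W, ∀ i, ρ (x i) = w i := by
  obtain ⟨g, hg⟩ := (Finsupp.linearCombination F x).exists_leftInverse_of_injective
    (LinearMap.ker_eq_bot.2 h)
  refine ⟨(Finsupp.linearCombination F w).comp g, fun i => ?_⟩
  have hgi := LinearMap.congr_fun hg (Finsupp.single i 1)
  simp only [LinearMap.comp_apply, Finsupp.linearCombination_single, one_smul] at hgi
  simp [hgi]

section Relocation

variable {𝒲 : Type} [NormedAddCommGroup 𝒲] [NormedSpace ℝ 𝒲] {E L : Type*} [AddCommGroup E]
  [Module ℚ E] {ι : E →+ 𝒲} {lt : L → L → Prop} {a : L} {x : ℕ → E} {K : ℕ}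

lemma norm_map_rat_smul (l : ℚ) (v : E) : ‖ι (l • v)‖ = |(l : ℝ)| * ‖ι v‖ := by
  have h := map_ratCast_smul ι ℚ ℝ l v
  rw [Rat.cast_id] at h
  rw [h, norm_smul, Real.norm_eq_abs]

lemma exists_rat_smul_norm_le {u v : E} (hu : ι u ≠ 0) (hv : ι v ≠ 0) :
    ∃ l : ℚ, l ≠ 0 ∧ ‖ι u‖ ≤ 2 * ‖ι (l • v)‖ ∧ ‖ι (l • v)‖ ≤ 2 * ‖ι u‖ := by
  have hu := norm_pos_iff.2 hu
  have hv := norm_pos_iff.2 hv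
  obtain ⟨l, hl, hl'⟩ := exists_rat_btwn
    (show ‖ι u‖ / 2 / ‖ι v‖ < 2 * ‖ι u‖ / ‖ι v‖ by gcongr; linarith)
  have hl₀ : (0 : ℝ) < l := lt_trans (by positivity) hl
  rw [div_lt_iff₀ hv] at hl
  rw [lt_div_iff₀ hv] at hl'
  have hnorm : ‖ι (l • v)‖ = l * ‖ι v‖ := by rw [norm_map_rat_smul, abs_of_pos hl₀]
  exact ⟨l, by exact_mod_cast hl₀.ne', by linarith, by linarith⟩

lemma BasisProjections.exists_distorts_shift (hx : BasisProjections (ι ∘ x))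
    (hι : Function.Injective ι) (m : ℕ) : ∃ M : ℕ, ∀ c, ∃ l : ℕ → ℚ,
      Distorts (‖ι ·‖) M (Submodule.span ℚ ((fun i => (x i, l i • x (i + c))) '' Set.Iio m)) := by
  obtain ⟨M, hM⟩ := exists_nat_ge (m * 2 * (2 * hx.const))
  refine ⟨M, fun c => ?_⟩
  choose l hl₀ hl using fun i => exists_rat_smul_norm_le (hx.ne_zero i) (hx.ne_zero (i + c))
  have hxl : BlockOf ℚ x fun i => l i • x (i + c) :=
    ⟨fun i => smul_ne_zero (hl₀ i) fun h => hx.ne_zero (i + c) (by simp [h]), (· + c),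
      strictMono_id.add_const c,
      fun i => Submodule.smul_mem _ _ (Submodule.subset_span ⟨i + c, by simp, rfl⟩)⟩
  obtain ⟨hz, hzconst⟩ := hx.exists_of_blockOf (hxl.map hι)
  exact ⟨l, distorts_span_image_of_norm_le hx hz zero_le_two (fun i _ => hl i) hM
    (hzconst.symm ▸ hM)⟩

/-- The point is that the distortion does not depend on `c`. -/
lemma BasisProjections.exists_relocation (hx : BasisProjections (ι ∘ x))
    (hι : Function.Injective ι) (m : ℕ) : ∃ M : ℕ, ∀ c, ∃ ρ : E →ₗ[ℚ] E,
      (∀ i ≥ m, ρ (x i) = x i) ∧ (∀ i < m, ρ (x i) ∈ tailSpan ℚ x c) ∧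
      Distorts (‖ι ·‖) M ((Submodule.span ℚ (x '' Set.Iio m) ⊔ tailSpan ℚ x (c + m)).map
        (LinearMap.id.prod ρ)) := by
  obtain ⟨M₀, hM₀⟩ := hx.exists_distorts_shift hι m
  obtain ⟨M, hM⟩ := exists_nat_ge (M₀ * hx.const + (1 : ℕ) * (1 + hx.const))
  refine ⟨M, fun c => ?_⟩
  obtain ⟨l, hl⟩ := hM₀ c
  obtain ⟨ρ, hρ⟩ := exists_linearMap_apply_eq (linearIndependent_of_comp ι hx.linearIndependent)
    fun i => if i < m then l i • x (i + c) else x i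
  have hρ_lt (i : ℕ) (hi : i < m) : ρ (x i) = l i • x (i + c) := by rw [hρ, if_pos hi]
  have hρ_ge (i : ℕ) (hi : m ≤ i) : ρ (x i) = x i := by rw [hρ, if_neg hi.not_gt]
  refine ⟨ρ, hρ_ge, fun i hi => ?_, ?_⟩
  · rw [hρ_lt i hi]
    exact Submodule.smul_mem _ _ (mem_tailSpan x (Nat.le_add_left c i))
  have hlow : (Submodule.span ℚ (x '' Set.Iio m)).map (LinearMap.id.prod ρ) =
      Submodule.span ℚ ((fun i => (x i, l i • x (i + c))) '' Set.Iio m) := by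
    rw [Submodule.map_span, Set.image_image]
    exact congrArg _ (Set.image_congr fun i hi => Prod.ext rfl (hρ_lt i hi))
  have hhigh : (tailSpan ℚ x (c + m)).map (LinearMap.id.prod ρ) =
      Submodule.span ℚ ((fun i => (x i, x i)) '' Set.Ici (c + m)) := by
    rw [tailSpan, Submodule.map_span, Set.image_image]
    exact congrArg _ (Set.image_congr fun i hi =>
      Prod.ext rfl (hρ_ge i ((Nat.le_add_left m c).trans hi)))
  rw [Submodule.map_sup, hlow, hhigh]
  refine hl.sup hx hx (K := 1) (k := m) (l := c + m) (fun p hp => ?_)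
    (Submodule.span_le.2 (Set.image_subset_iff.2 fun i hi => ⟨?_, ?_⟩))
    (Submodule.span_le.2 (Set.image_subset_iff.2 fun i hi => ⟨?_, ?_⟩)) hM hM
  · have hp : p.1 = p.2 := LinearMap.eqOn_span (f := LinearMap.fst ℚ E E)
      (g := LinearMap.snd ℚ E E) (by rintro _ ⟨i, -, rfl⟩; rfl) hp
    simp [hp]
  · exact Submodule.subset_span ⟨i, hi, rfl⟩
  · exact Submodule.smul_mem _ _ (Submodule.subset_span ⟨i + c, by grind, rfl⟩)
  · exact mem_tailSpan x ((Nat.le_add_left m c).trans hi)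
  · exact mem_tailSpan x hi

/-- The vectors available at the start are moved far out by a relocation; from then on they are
part of the moves. -/
theorem WinsAsymptotic.exists_of_space (hx : BasisProjections (ι ∘ x))
    (hι : Function.Injective ι) {U G : Submodule ℚ E} (hG : G.FG) (hGx : G ≤ tailSpan ℚ x 0)
    (h : WinsAsymptotic (‖ι ·‖) lt K U (tailSpan ℚ x) a ⟨⊥, G, Submodule.fg_bot, hG⟩) :
    ∃ K', WinsAsymptotic (‖ι ·‖) lt K' U (tailSpan ℚ x) a ⊥ := by
  obtain ⟨m, hm⟩ := exists_le_span_image_Iio hG hGx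
  replace hm : G ≤ Submodule.span ℚ (x '' Set.Iio m) :=
    hm.trans (Submodule.span_mono (Set.image_mono Set.inter_subset_right))
  obtain ⟨M, hM⟩ := hx.exists_relocation hι m
  refine ⟨K * M, Survives.of_forall_exists_move fun b hb ⟨n, C⟩ => ?_⟩
  obtain ⟨ρ, hfix, hmove, hdist⟩ := hM n
  have hid {F : Submodule ℚ E} (hF : F ≤ tailSpan ℚ x m) : F.map ρ = F :=
    map_eq_self_of_le_span (Set.forall_mem_image.2 fun i hi => hfix i hi) hF
  replace hdist := hdist.anti (Submodule.map_mono (sup_le_sup_right hm _))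
  obtain ⟨q, ⟨⟨F, hF, -, hqF⟩, hq⟩, hwin⟩ := h.exists_move hb (n + m, C)
  have hqG : q.space ≤ G ⊔ tailSpan ℚ x (n + m) := hqF ▸ sup_le_sup_left hF G
  have hρq : q.space.map ρ ≤ tailSpan ℚ x n := by
    rw [hqF, Submodule.map_sup, hid (hF.trans (tailSpan_antitone x (Nat.le_add_left m n)))]
    refine sup_le ((Submodule.map_mono hm).trans ?_)
      (hF.trans (tailSpan_antitone x (Nat.le_add_right n m)))
    exact Submodule.map_le_iff_le_comap.2
      (Submodule.span_le.2 (Set.forall_mem_image.2 fun i hi => hmove i hi))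
  have hext := hq.map (hdist.anti (Submodule.map_mono hqG))
  rw [Submodule.map_bot] at hext
  refine ⟨q.map ρ, ⟨⟨_, hρq, q.space_fg.map ρ, (bot_sup_eq (q.space.map ρ)).symm⟩, hext⟩,
    WinsAsymptotic.map hdist (fun k => ⟨max k (n + m), ?_, ?_⟩) hqG hwin⟩
  · exact (tailSpan_antitone x (le_max_right k (n + m))).trans le_sup_right
  · rw [hid (tailSpan_antitone x (by lia))]
    exact tailSpan_antitone x (le_max_left k (n + m))

end Relocation

/-! ### Tightness -/

section Cuts

lemma exists_strictMono_eventually {I : Type*} [Countable I] {P : I → ℕ → ℕ → Prop}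
    (h : ∀ i r, ∀ᶠ n in atTop, P i r n) :
    ∃ a : ℕ → ℕ, StrictMono a ∧ ∀ i, ∀ᶠ j in atTop, P i (a j) (a (j + 1)) := by
  obtain ⟨f, hf⟩ := exists_injective_nat I
  have hnext (j r : ℕ) : ∃ n > r, ∀ i ∈ f ⁻¹' Set.Iic j, P i r n :=
    ((eventually_gt_atTop r).and ((eventually_all_finite
      ((Set.finite_Iic j).preimage hf.injOn)).2 fun i _ => h i r)).exists
  choose N hN hP using hnext
  let a : ℕ → ℕ := fun j => Nat.rec 0 N j
  exact ⟨a, strictMono_nat_of_lt_succ fun j => hN j (a j),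
    fun i => (eventually_ge_atTop (f i)).mono fun j hj => hP j (a j) i hj⟩

end Cuts

section Refutation

variable {R E : Type*} [Ring R] [AddCommGroup E] [Module R E] {ν : E → ℝ} {K k m m' n r r' : ℕ}
  {x Z w w' : ℕ → E} {ξ : Ordinal.{0}} {p : Position R E} {S : Set ℕ}

/-- With clock `ξ` the first player has a move from `p` which leads to positions lost by the
second player, where the answer has to be given in the tail of `x` from `n` on. -/
def RefutedFrom (ν : E → ℝ) (K : ℕ) (x Z : ℕ → E) (ξ : Ordinal.{0}) (p : Position R E)
    (n : ℕ) : Prop :=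
  ∃ ξ' < ξ, ∃ k : ℕ, ∀ q,
    Answers ν K (tailSpan R x n) (Submodule.span R (Z '' Set.Iio k)) p q →
      ¬WinsAsymptotic ν (· < ·) K (tailSpan R Z 0) (tailSpan R x) ξ' q

lemma eventually_refutedFrom
    (h : ¬WinsAsymptotic ν (· < ·) K (tailSpan R Z 0) (tailSpan R x) ξ p) :
    ∀ᶠ n in atTop, RefutedFrom ν K x Z ξ p n := by
  have hmove := mt Survives.of_forall_exists_move h
  push Not at hmove
  obtain ⟨ξ', hξ', ⟨n, C, hC, hCZ⟩, hlose⟩ := hmove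
  obtain ⟨k, hk⟩ := exists_le_span_image_Iio hC hCZ
  filter_upwards [eventually_ge_atTop n] with n' hn'
  refine ⟨ξ', hξ', k, fun q hq => hlose q ?_⟩
  obtain ⟨hspace, hext⟩ := hq.mono (tailSpan_antitone x hn')
  exact ⟨hspace, hext.le, hext.range_le, hk.trans ((Submodule.span_mono
    (Set.image_mono Set.inter_subset_right)).trans hext.le_domain), hext.distorts⟩

/-- The position in which `Γ` has been built and the vectors `x i` with `i ∈ S` and `i < r` have
been used. -/
def stage (x : ℕ → E) (S : Set ℕ) (r : ℕ) (Γ : {Γ : Submodule R (E × E) // Γ.FG}) :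
    Position R E where
  rel := Γ
  space := Submodule.span R (x '' (S ∩ Set.Iio r))
  rel_fg := Γ.2
  space_fg := Submodule.fg_span (((Set.finite_Iio r).inter_of_right S).image x)

lemma eventually_refutedFrom_stage (ν : E → ℝ) (K : ℕ) (x Z : ℕ → E) (ξ : Ordinal.{0})
    (Γ : {Γ : Submodule R (E × E) // Γ.FG}) (r : ℕ) :
    ∀ᶠ n in atTop, ∀ S : Set ℕ,
      ¬WinsAsymptotic ν (· < ·) K (tailSpan R Z 0) (tailSpan R x) ξ (stage x S r Γ) →
        RefutedFrom ν K x Z ξ (stage x S r Γ) n := by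
  have hfin : ∀ᶠ n in atTop, ∀ J ∈ {J : Set ℕ | J ⊆ Set.Iio r},
      ¬WinsAsymptotic ν (· < ·) K (tailSpan R Z 0) (tailSpan R x) ξ (stage x J r Γ) →
        RefutedFrom ν K x Z ξ (stage x J r Γ) n := by
    refine (eventually_all_finite (Set.finite_Iio r).finite_subsets).2 fun J _ => ?_
    by_cases h : WinsAsymptotic ν (· < ·) K (tailSpan R Z 0) (tailSpan R x) ξ (stage x J r Γ)
    · exact .of_forall fun n hn => absurd h hn
    · exact (eventually_refutedFrom h).mono fun n hn _ => hn
  filter_upwards [hfin] with n hn S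
  have hstage : stage x (S ∩ Set.Iio r) r Γ = stage x S r Γ := by
    simp [stage, Set.inter_assoc]
  exact hstage ▸ hn _ Set.inter_subset_right

variable (R) in
/-- The linear relation spanned by the pairs `(Z i, w i)` for `i < m`. -/
def pairRel (Z w : ℕ → E) (m : ℕ) : {Γ : Submodule R (E × E) // Γ.FG} :=
  ⟨Submodule.span R ((fun i => (Z i, w i)) '' Set.Iio m),
    Submodule.fg_span ((Set.finite_Iio m).image _)⟩

/-- The gap of `S` between `r` and `n` makes the new vectors a legal answer. -/
lemma answers_stage (hgap : ∀ i ∈ S, r ≤ i → n ≤ i) (hrr' : r ≤ r') (hmm' : m ≤ m') (hk : k ≤ m')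
    (hww' : ∀ i < m, w' i = w i)
    (hw' : ∀ i < m', w' i ∈ Submodule.span R (x '' (S ∩ Set.Iio r')))
    (hdist : Distorts ν K (pairRel R Z w' m').1) :
    Answers ν K (tailSpan R x n) (Submodule.span R (Z '' Set.Iio k))
      (stage x S r (pairRel R Z w m)) (stage x S r' (pairRel R Z w' m')) where
  left := by
    refine ⟨Submodule.span R (x '' (S ∩ Set.Ico r r')), Submodule.span_mono (Set.image_mono ?_),
      Submodule.fg_span (((Set.finite_Ico r r').inter_of_right S).image x), ?_⟩
    · exact fun i hi => hgap i hi.1 hi.2.1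
    · simp only [stage]
      rw [← Submodule.span_union, ← Set.image_union, ← Set.inter_union_distrib_left,
        Set.Iio_union_Ico_eq_Iio hrr']
  right :=
    { le := Submodule.span_mono <| Set.image_subset_iff.2 fun i hi =>
        ⟨i, hi.trans_le hmm', Prod.ext rfl (hww' i hi)⟩
      range_le := Submodule.map_le_iff_le_comap.2 <| Submodule.span_le.2 <|
        Set.image_subset_iff.2 hw'
      le_domain := Submodule.span_le.2 <| Set.image_subset_iff.2 fun i hi =>
        ⟨(Z i, w' i), Submodule.subset_span ⟨i, hi.trans_le hk, rfl⟩, rfl⟩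
      distorts := hdist }

end Refutation

section Tracking

variable {𝒲 : Type} [NormedAddCommGroup 𝒲] [NormedSpace ℝ 𝒲] {E : Type*} [AddCommGroup E]
  [Module ℚ E] {ι : E →+ 𝒲} {x Z w : ℕ → E} {y : ℕ → 𝒲} {S : Set ℕ} {δ : ℕ → ℝ} {t t' : List 𝒲}
  {Y : Set 𝒲} {K₀ : ℝ} {K k n r : ℕ}

/-- The entries of `t` are approximated by vectors `w i` of `G`, up to the tolerances `δ i`. -/
def Tracks (ι : E →+ 𝒲) (δ : ℕ → ℝ) (G : Submodule ℚ E) (t : List 𝒲) (w : ℕ → E) : Prop :=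
  ∀ i < t.length, w i ∈ G ∧ ‖t.getD i 0 - ι (w i)‖ ≤ δ i

lemma exists_norm_sub_le_of_mem_closedSpan {v : 𝒲} (hv : v ∈ closedSpan ((ι ∘ x) '' S)) {ε : ℝ}
    (hε : 0 < ε) : ∃ f ∈ Submodule.span ℚ (x '' S), ‖v - ι f‖ ≤ ε := by
  obtain ⟨_, ⟨f, hf, rfl⟩, hd⟩ :=
    Metric.mem_closure_iff.1 (mem_closure_image_of_mem_closedSpan hv) ε hε
  exact ⟨f, hf, dist_eq_norm v (ι f) ▸ hd.le⟩

lemma Tracks.exists_extension (hw : Tracks ι δ (Submodule.span ℚ (x '' S)) t w)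
    (hδ : ∀ i, 0 < δ i) (htt' : t <+: t') (ht' : ∀ v ∈ t', v ∈ closedSpan ((ι ∘ x) '' S)) :
    ∃ w', (∀ i < t.length, w' i = w i) ∧ Tracks ι δ (Submodule.span ℚ (x '' S)) t' w' := by
  have happrox (i : ℕ) (hi : i < t'.length) :
      ∃ f ∈ Submodule.span ℚ (x '' S), ‖t'.getD i 0 - ι f‖ ≤ δ i := by
    refine exists_norm_sub_le_of_mem_closedSpan (ht' _ ?_) (hδ i)
    rw [List.getD_eq_getElem _ _ hi]
    exact List.getElem_mem hi
  choose! f hf using happrox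
  refine ⟨fun i => if i < t.length then w i else f i, fun i hi => if_pos hi, fun i hi => ?_⟩
  dsimp only
  split_ifs with hit
  · obtain ⟨s, rfl⟩ := htt'
    rw [List.getD_append _ _ _ _ hit]
    exact hw i hit
  · exact hf i hi

omit [NormedSpace ℝ 𝒲] in
lemma Tracks.eventually (hw : Tracks ι δ (Submodule.span ℚ (x '' S)) t w) :
    ∀ᶠ r in atTop, Tracks ι δ (Submodule.span ℚ (x '' (S ∩ Set.Iio r))) t w := by
  obtain ⟨k, hk⟩ := exists_le_span_image_Iio
    (Submodule.fg_span ((Set.finite_Iio t.length).image w))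
    (Submodule.span_le.2 (Set.image_subset_iff.2 fun i hi => (hw i hi).1))
  filter_upwards [eventually_ge_atTop k] with r hr i hi
  refine ⟨Submodule.span_mono (Set.image_mono ?_) (hk (Submodule.subset_span ⟨i, hi, rfl⟩)),
    (hw i hi).2⟩
  exact Set.inter_subset_inter_right S (Set.Iio_subset_Iio hr)

/-- The distortions of `Z i ↦ y i ↦ t i ↦ w i` multiply to `2 * K₀ * 2`. -/
lemma Tracks.distorts {G : Submodule ℚ E} (hy : BasisProjections y) (hK₀ : 1 ≤ K₀)
    (hZ : ∀ i, ‖y i - ι (Z i)‖ ≤ (1 / 2) / (4 * hy.const) * (1 / 2) ^ i * ‖y i‖)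
    (ht : t ∈ embTree y Y K₀)
    (hw : Tracks ι (fun i => (1 / (2 * K₀)) / (4 * hy.const) * (1 / 2) ^ i * ‖y i‖) G t w)
    (hK : 4 * K₀ ≤ K) : Distorts (‖ι ·‖) K (pairRel ℚ Z w t.length).1 := by
  intro p hp
  change p ∈ Submodule.span ℚ ((fun i => (Z i, w i)) '' Set.Iio t.length) at hp
  rw [← Finset.coe_range, mem_span_image_iff_exists_sum] at hp
  obtain ⟨c, rfl⟩ := hp
  simp only [Prod.fst_sum, Prod.snd_sum, Prod.smul_fst, Prod.smul_snd, map_sum_smul]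
  have hyZ := hy.norm_sum_sub_sum_le (n := t.length) y (ι ∘ Z) (η := 1 / 2) (by norm_num)
    (fun i _ => hZ i) fun i => c i
  have htw := hy.norm_sum_sub_sum_le (fun i => t.getD i 0) (ι ∘ w) (by positivity)
    (fun i hi => (hw i hi).2) fun i => c i
  obtain ⟨hty, hty'⟩ := ht.2 fun i => c i
  set sy := ∑ i ∈ Finset.range t.length, (c i : ℝ) • y i
  set sZ := ∑ i ∈ Finset.range t.length, (c i : ℝ) • (ι ∘ Z) i
  set st := ∑ i ∈ Finset.range t.length, (c i : ℝ) • t.getD i 0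
  set sw := ∑ i ∈ Finset.range t.length, (c i : ℝ) • (ι ∘ w) i
  have hst : ‖st‖ ≤ K₀ * ‖sy‖ := by rwa [one_div, inv_mul_le_iff₀ (by positivity)] at hty
  obtain ⟨hyZ, hZy⟩ := norm_le_two_mul_norm_of_norm_sub_le hyZ
  obtain ⟨htw, hwt⟩ := norm_le_two_mul_norm_of_norm_sub_le (u := st) (v := sw) <|
    calc ‖st - sw‖ ≤ 1 / (2 * K₀) * ‖sy‖ := htw
      _ ≤ 1 / (2 * K₀) * (K₀ * ‖st‖) := by gcongr
      _ = 1 / 2 * ‖st‖ := by field_simp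
  constructor
  · calc ‖sZ‖ ≤ 2 * ‖sy‖ := hZy
      _ ≤ 2 * (K₀ * (2 * ‖sw‖)) := by gcongr; exact hty'.trans (by gcongr)
      _ = 4 * K₀ * ‖sw‖ := by ring
      _ ≤ K * ‖sw‖ := by gcongr
  · calc ‖sw‖ ≤ 2 * ‖st‖ := hwt
      _ ≤ 2 * (K₀ * (2 * ‖sZ‖)) := by gcongr; exact hst.trans (by gcongr)
      _ = 4 * K₀ * ‖sZ‖ := by ring
      _ ≤ K * ‖sZ‖ := by gcongr

lemma Tracks.exists_answers (hy : BasisProjections y) (hK₀ : 1 ≤ K₀)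
    (hZ : ∀ i, ‖y i - ι (Z i)‖ ≤ (1 / 2) / (4 * hy.const) * (1 / 2) ^ i * ‖y i‖)
    (hδ : δ = fun i => (1 / (2 * K₀)) / (4 * hy.const) * (1 / 2) ^ i * ‖y i‖)
    (hK : 4 * K₀ ≤ K) (hw : Tracks ι δ (Submodule.span ℚ (x '' (S ∩ Set.Iio r))) t w)
    (hgap : ∀ i ∈ S, r ≤ i → n ≤ i) (htt' : t <+: t') (hk : k ≤ t'.length)
    (ht' : t' ∈ embTree y (closedSpan ((ι ∘ x) '' S)) K₀) :
    ∃ w', ∀ᶠ r' in atTop, Tracks ι δ (Submodule.span ℚ (x '' (S ∩ Set.Iio r'))) t' w' ∧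
      Answers (‖ι ·‖) K (tailSpan ℚ x n) (Submodule.span ℚ (Z '' Set.Iio k))
        (stage x S r (pairRel ℚ Z w t.length)) (stage x S r' (pairRel ℚ Z w' t'.length)) := by
  have hδ₀ (i : ℕ) : 0 < δ i := by
    have hyi : 0 < ‖y i‖ := norm_pos_iff.2 (hy.ne_zero i)
    have hC := hy.const_pos
    rw [hδ]
    positivity
  have hwS : Tracks ι δ (Submodule.span ℚ (x '' S)) t w := fun i hi =>
    ⟨Submodule.span_mono (Set.image_mono Set.inter_subset_left) (hw i hi).1, (hw i hi).2⟩
  obtain ⟨w', hww', hw'⟩ := hwS.exists_extension hδ₀ htt' ht'.1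
  have hdist := Tracks.distorts hy hK₀ hZ ht' (hδ ▸ hw') hK
  refine ⟨w', ?_⟩
  filter_upwards [hw'.eventually, eventually_ge_atTop r] with r' hr' hrr'
  exact ⟨hr', answers_stage hgap hrr' htt'.length_le hk hww' (fun i hi => (hr' i hi).1) hdist⟩

end Tracking

section Tight

variable {𝒲 : Type} [NormedAddCommGroup 𝒲] [NormedSpace ℝ 𝒲] {E : Type*} [AddCommGroup E]
  [Module ℚ E] {ι : E →+ 𝒲} {x Z w : ℕ → E} {y : ℕ → 𝒲} {α ξ ξ' : Ordinal.{0}}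

lemma omega0_mul_add_natCast_le (h : ξ' < ξ) (k : ℕ) :
    Ordinal.omega0 * ξ' + k ≤ Ordinal.omega0 * ξ :=
  calc Ordinal.omega0 * ξ' + k ≤ Ordinal.omega0 * ξ' + Ordinal.omega0 := by
        gcongr; exact (Ordinal.natCast_lt_omega0 k).le
    _ = Ordinal.omega0 * Order.succ ξ' := (Ordinal.mul_succ _ _).symm
    _ ≤ Ordinal.omega0 * ξ := by gcongr; exact Order.succ_le_of_lt h

/-- The first player refutes the second one, whose answers are read off the tree. One round costs
the clock at least `1`, and the rank of the node less than `ω`. -/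
lemma not_rankGE_of_refutedFrom {a : ℕ → ℕ} {A S : Set ℕ} {K : ℕ} {K₀ : ℝ}
    (hy : BasisProjections y) (hK₀ : 1 ≤ K₀)
    (hZ : ∀ i, ‖y i - ι (Z i)‖ ≤ (1 / 2) / (4 * hy.const) * (1 / 2) ^ i * ‖y i‖)
    {δ : ℕ → ℝ} (hδ : δ = fun i => (1 / (2 * K₀)) / (4 * hy.const) * (1 / 2) ^ i * ‖y i‖)
    (hK : 4 * K₀ ≤ K) (ha : StrictMono a)
    (hcut : ∀ ξ ≤ α, ∀ Γ, ∀ᶠ j in atTop,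
      ¬WinsAsymptotic (‖ι ·‖) (· < ·) K (tailSpan ℚ Z 0) (tailSpan ℚ x) ξ (stage x S (a j) Γ) →
        RefutedFrom (‖ι ·‖) K x Z ξ (stage x S (a j) Γ) (a (j + 1)))
    (hA : A.Infinite) (hS : ∀ j ∈ A, ∀ i ∈ S, a j ≤ i → a (j + 1) ≤ i) (hξ : ξ ≤ α) {j : ℕ}
    (hj : j ∈ A) {t : List 𝒲} (ht : t ∈ embTree y (closedSpan ((ι ∘ x) '' S)) K₀)
    (hw : Tracks ι δ (Submodule.span ℚ (x '' (S ∩ Set.Iio (a j)))) t w)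
    (href : RefutedFrom (‖ι ·‖) K x Z ξ (stage x S (a j) (pairRel ℚ Z w t.length)) (a (j + 1))) :
    ¬RankGE (embTree y (closedSpan ((ι ∘ x) '' S)) K₀) (Ordinal.omega0 * ξ) t := by
  induction ξ using WellFoundedLT.induction generalizing j t w with
  | ind ξ ih =>
    intro hrank
    obtain ⟨ξ', hξ', k, hlose⟩ := href
    obtain ⟨t', ht', htt', hlen, hrank'⟩ := RankGE.exists_extension_add_nat ht k
      (Survives.anti hrank (omega0_mul_add_natCast_le hξ' k))
    obtain ⟨w', hw'⟩ := hw.exists_answers hy hK₀ hZ hδ hK (hS j hj) htt'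
      ((Nat.le_add_left k _).trans hlen) ht'
    obtain ⟨j', hj', ⟨hw', hans⟩, hcut'⟩ := ((Nat.frequently_atTop_iff_infinite.2 hA).and_eventually
      ((ha.tendsto_atTop.eventually hw').and
        (hcut ξ' (hξ'.le.trans hξ) (pairRel ℚ Z w' t'.length)))).exists
    exact ih ξ' hξ' (hξ'.le.trans hξ) hj' ht' hw' (hcut' (hlose _ hans)) hrank'

lemma BasisProjections.exists_blockOf_norm_sub_le_of_blockOf (hy : BasisProjections y)
    (hxy : BlockOf ℝ (ι ∘ x) y) : ∃ Z, BlockOf ℚ x Z ∧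
      ∀ i, ‖y i - ι (Z i)‖ ≤ (1 / 2) / (4 * hy.const) * (1 / 2) ^ i * ‖y i‖ := by
  obtain ⟨hy₀, N, hN, hyN⟩ := hxy
  have hC := hy.one_le_const
  have hpos (i : ℕ) : 0 < ‖y i‖ := norm_pos_iff.2 (hy₀ i)
  choose Z hZ hyZ using fun i => exists_norm_sub_le_of_mem_closedSpan (ι := ι) (x := x)
    (Submodule.le_topologicalClosure _ (hyN i))
    (ε := (1 / 2) / (4 * hy.const) * (1 / 2) ^ i * ‖y i‖) (by have := hpos i; positivity)
  refine ⟨Z, ⟨fun i hi => ?_, N, hN, hZ⟩, hyZ⟩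
  refine (hyZ i).not_gt ?_
  rw [hi, map_zero, sub_zero]
  refine mul_lt_of_lt_one_left (hpos i) (mul_lt_one_of_nonneg_of_lt_one_left (by positivity) ?_
    (pow_le_one₀ (by norm_num) (by norm_num)))
  rw [div_lt_one (by positivity)]
  linarith

lemma intervalSeq_Icc {a : ℕ → ℕ} (ha : StrictMono a) :
    IntervalSeq fun j => Finset.Icc (a j) (a (j + 1) - 1) := by
  refine ⟨fun j => ⟨_, _, Nat.le_sub_one_of_lt (ha j.lt_succ_self), rfl⟩, fun j i hi i' hi' => ?_⟩
  have := ha j.lt_succ_self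
  rw [Finset.mem_Icc] at hi hi'
  lia

lemma residualSpace_eq_closedSpan (b : ℕ → 𝒲) (I : ℕ → Finset ℕ) (A : Set ℕ) :
    residualSpace b I A = closedSpan (b '' {n | ∀ m ∈ A, n ∉ I m}) := by
  simp only [residualSpace, Set.image, Set.mem_ofPred_eq, eq_comm]

theorem isAlphaTight_of_forall_not_winsAsymptotic [Countable E] [Countable (Set.Iic α)]
    (hx : BasisProjections (ι ∘ x)) (hι : Function.Injective ι)
    (h : ∀ Z, BlockOf ℚ x Z → ∀ K,
      ¬WinsAsymptotic (‖ι ·‖) (· < ·) K (tailSpan ℚ Z 0) (tailSpan ℚ x) α ⊥) :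
    IsAlphaTight (ι ∘ x) (Ordinal.omega0 * α) := by
  intro y hxy
  replace hxy := isBlockSeq_iff_blockOf.1 hxy
  obtain ⟨hy, -⟩ := hx.exists_of_blockOf hxy
  obtain ⟨Z, hxZ, hZ⟩ := hy.exists_blockOf_norm_sub_le_of_blockOf hxy
  obtain ⟨a, ha, hcut⟩ := exists_strictMono_eventually fun
    (i : ℕ × Set.Iic α × {Γ : Submodule ℚ (E × E) // Γ.FG}) r =>
      eventually_refutedFrom_stage (‖ι ·‖) i.1 x Z i.2.1 i.2.2 r
  refine ⟨_, intervalSeq_Icc ha, fun A hA => not_lt.1 fun hlt => ?_⟩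
  rw [residualSpace_eq_closedSpan] at hlt
  set S := {n | ∀ j ∈ A, n ∉ Finset.Icc (a j) (a (j + 1) - 1)}
  have hS (j) (hj : j ∈ A) (i) (hi : i ∈ S) (hji : a j ≤ i) : a (j + 1) ≤ i := by
    have := hi j hj
    rw [Finset.mem_Icc] at this
    lia
  obtain ⟨K₀, hK₀, hrank⟩ := coe_lt_embIndex_iff.1 hlt
  obtain ⟨K, hK⟩ := exists_nat_ge (4 * K₀)
  have hcutS (ξ) (hξ : ξ ≤ α) (Γ) := (hcut (K, ⟨ξ, hξ⟩, Γ)).mono fun j hj => hj S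
  obtain ⟨j, hj, hcutj⟩ := ((Nat.frequently_atTop_iff_infinite.2 hA).and_eventually
    (hcutS α le_rfl (pairRel ℚ Z 0 0))).exists
  refine not_rankGE_of_refutedFrom hy hK₀ hZ rfl hK ha hcutS hA hS le_rfl hj
    (nil_mem_embTree _ _ _) (w := 0) (by simp [Tracks]) (hcutj fun hwin => ?_) hrank
  have hbot : pairRel ℚ Z 0 0 = ⟨⊥, Submodule.fg_bot⟩ := Subtype.ext (by simp [pairRel])
  rw [hbot] at hwin
  obtain ⟨K', hwin'⟩ := WinsAsymptotic.exists_of_space hx hι _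
    (Submodule.span_mono (Set.image_mono fun i _ => i.zero_le)) hwin
  exact h Z hxZ K' hwin'

end Tight

/-! ### The dichotomy -/

section Dichotomy

open scoped Ordinal

variable {R E : Type*} [Ring R] [AddCommGroup E] [Module R E] [Countable E] {ν : E → ℝ}
  {x : ℕ → E} {α γ : Ordinal.{0}}

lemma exists_blockOf_embedsFor_of_lt_omega_one (hγ : γ < ω₁) (hx : ∀ n, x n ≠ 0)
    (h : ∀ y, BlockOf R x y → ∃ K, WinsForBlock ν (· < ·) K γ (⊥ : Position R E) y) :
    ∃ y, BlockOf R x y ∧ ∃ K, ∀ z, BlockOf R y z →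
      EmbedsFor ν (· < ·) K (tailSpan R y 0) (tailSpan R z 0) γ ⊥ := by
  have : Countable (Set.Iic γ) := (countable_Iic_of_lt_omega_one hγ).to_subtype
  obtain ⟨u, hxu, y, huy, K, hK⟩ := exists_blockOf_embedsFor (R := R) (ν := ν)
    (lt := fun b c : Set.Iic γ => b < c) (a := ⊤) hx fun y hy => by
      obtain ⟨K, w, hw, hwin⟩ := h y hy
      exact ⟨K, w, hw, survives_Iic_top_iff.2 hwin⟩
  exact ⟨y, hxu.trans huy, K, fun z hz => survives_Iic_top_iff.1 (hK z (huy.trans hz))⟩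

lemma exists_least_ordinal_not_winsForBlock (hx : ∀ n, x n ≠ 0)
    (h : ∀ K, ¬WinsForBlock ν (fun _ _ : Unit => True) K () (⊥ : Position R E) x) :
    ∃ α < (ω₁ : Ordinal.{0}), ∃ z, BlockOf R x z ∧
      (∀ K, ¬WinsForBlock ν (· < ·) K α (⊥ : Position R E) z) ∧
      ∀ γ < α, ∀ w, BlockOf R z w →
        ∃ K, WinsForBlock ν (· < ·) K γ (⊥ : Position R E) w := by
  let s : Set Ordinal.{0} :=
    {β | ∃ z, BlockOf R x z ∧ ∀ K, ¬WinsForBlock ν (· < ·) K β (⊥ : Position R E) z}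
  obtain ⟨β, hβ, hβx⟩ : ∃ β < ω₁, ∀ K, ¬WinsForBlock ν (· < ·) K β (⊥ : Position R E) x := by
    by_contra! hwin
    obtain ⟨K, hK⟩ := exists_winsForBlock_of_forall_lt_omega_one hwin
    exact h K hK
  have hβs : β ∈ s := ⟨x, .refl hx, hβx⟩
  obtain ⟨z, hxz, hz⟩ := csInf_mem ⟨β, hβs⟩
  refine ⟨sInf s, (csInf_le' hβs).trans_lt hβ, z, hxz, hz, fun γ hγ w hzw => ?_⟩
  by_contra! hw
  exact notMem_of_lt_csInf' hγ ⟨w, hxz.trans hzw, hw⟩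

lemma exists_blockOf_forall_lt_embedsFor (hα : α < ω₁) (hx : ∀ n, x n ≠ 0)
    (h : ∀ γ < α, ∀ y, BlockOf R x y →
      ∃ K, WinsForBlock ν (· < ·) K γ (⊥ : Position R E) y) :
    ∃ y, BlockOf R x y ∧ ∀ γ < α, ∃ m K, ∀ z, BlockOf R y z →
      EmbedsFor ν (· < ·) K (tailSpan R y m) (tailSpan R z m) γ ⊥ := by
  have : Countable (Set.Iio α) :=
    ((countable_Iic_of_lt_omega_one hα).mono Set.Iio_subset_Iic_self).to_subtype
  obtain ⟨y, hxy, hy⟩ := exists_blockOf_forall (R := R) (Q := fun (γ : Set.Iio α) y =>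
    ∃ m K, ∀ z, BlockOf R (fun n => y (n + m)) z →
      EmbedsFor ν (· < ·) K (tailSpan R y m) (tailSpan R z 0) γ.1 ⊥) hx
    (fun γ u hu => by
      obtain ⟨y, huy, K, hK⟩ := exists_blockOf_embedsFor_of_lt_omega_one (γ.2.trans hα)
        hu.ne_zero fun w hw => h γ γ.2 w (hu.trans hw)
      exact ⟨y, huy, 0, K, hK⟩)
    (fun γ u v ⟨l, huv⟩ ⟨m, K, hK⟩ => by
      have hshift : BlockOf R (fun n => u (n + m)) fun n => v (n + (l + m)) := by
        simpa only [add_assoc, add_comm m l] using huv.shift_shift m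
      refine ⟨l + m, K, fun z hz => (hK z (hshift.trans hz)).mono ?_ le_rfl⟩
      simpa only [tailSpan_shift, zero_add] using hshift.tailSpan_le 0)
  refine ⟨y, hxy, fun γ hγ => ?_⟩
  obtain ⟨m, K, hK⟩ := hy ⟨γ, hγ⟩
  exact ⟨m, K, fun z hz => by simpa only [tailSpan_shift, zero_add] using hK _ (hz.shift_shift m)⟩

end Dichotomy

section Spaces

open scoped Ordinal

variable {𝒲 : Type} [NormedAddCommGroup 𝒲] [NormedSpace ℝ 𝒲] {E : Type*} [AddCommGroup E]
  [Module ℚ E] [Countable E] {ι : E →+ 𝒲} {x : ℕ → E}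

theorem exists_isMinimalSpace_of_winsForBlock [CompleteSpace 𝒲] (hx : BasisProjections (ι ∘ x))
    (hι : Function.Injective ι) (h : ∀ y, BlockOf ℚ x y →
      ∃ K, WinsForBlock (‖ι ·‖) (fun _ _ : Unit => True) K () (⊥ : Position ℚ E) y) :
    ∃ X : Submodule ℝ 𝒲, IsClosed (X : Set 𝒲) ∧ ¬FiniteDimensional ℝ X ∧ IsMinimalSpace X := by
  obtain ⟨u, hxu, y, huy, K, hK⟩ :=
    exists_blockOf_embedsFor (fun n h₀ => hx.ne_zero n (by simp [h₀])) h
  obtain ⟨hy, -⟩ := hx.exists_of_blockOf ((hxu.trans huy).map hι)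
  exact ⟨closedSpan (Set.range (ι ∘ y)), Submodule.isClosed_topologicalClosure _,
    hy.not_finiteDimensional_closedSpan,
    isMinimalSpace_of_embedsFor hy hι fun z hz => ⟨K, hK z (huy.trans hz)⟩⟩

theorem exists_isAlphaMinimal_isAlphaTight_of_not_winsForBlock (hx : BasisProjections (ι ∘ x))
    (hι : Function.Injective ι)
    (h : ∀ K, ¬WinsForBlock (‖ι ·‖) (fun _ _ : Unit => True) K () (⊥ : Position ℚ E) x) :
    ∃ z, BlockOf ℚ x z ∧ ∃ α < (ω₁ : Ordinal.{0}),
      IsAlphaMinimal (ι ∘ z) α ∧ IsAlphaTight (ι ∘ z) (Ordinal.omega0 * α) := by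
  obtain ⟨α, hα, y, hxy, hlose, hwin⟩ :=
    exists_least_ordinal_not_winsForBlock (fun n h₀ => hx.ne_zero n (by simp [h₀])) h
  obtain ⟨z, hyz, hembeds⟩ := exists_blockOf_forall_lt_embedsFor hα hxy.ne_zero hwin
  have hxz := hxy.trans hyz
  obtain ⟨hz, -⟩ := hx.exists_of_blockOf (hxz.map hι)
  have := (countable_Iic_of_lt_omega_one hα).to_subtype
  refine ⟨z, hxz, α, hα, isAlphaMinimal_of_embedsFor hz hι fun γ hγ w hzw => ?_,
    isAlphaTight_of_forall_not_winsAsymptotic hz hι fun w hzw K hK =>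
      hlose K (.of_eventuallyBlockOf hyz.eventuallyBlockOf ⟨w, hzw, hK⟩)⟩
  obtain ⟨hw, -⟩ := hz.exists_of_blockOf (hzw.map hι)
  obtain ⟨m, K, hK⟩ := hembeds γ hγ
  exact (hK w hzw).of_tailSpan hz hw

end Spaces

/-- A Banach space with a Schauder basis either has a minimal
infinite-dimensional closed subspace, or has a block subspace `[x n]` that is both
`α`-minimal and `ω·α`-tight for some countable ordinal `α`. -/
theorem minimal_subspace_or_alpha_minimal_omega_alpha_tight
    (𝒲 : Type) [NormedAddCommGroup 𝒲] [NormedSpace ℝ 𝒲] [CompleteSpace 𝒲]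
    (e : ℕ → 𝒲) (he : IsSchauderBasis e) :
    (∃ X : Submodule ℝ 𝒲, IsClosed (X : Set 𝒲) ∧ ¬FiniteDimensional ℝ X ∧
      IsMinimalSpace X) ∨
    (∃ x : ℕ → 𝒲, IsBlockSeq e x ∧
      ∃ α : Ordinal, α < (Cardinal.aleph 1).ord ∧
        IsAlphaMinimal x α ∧ IsAlphaTight x (Ordinal.omega0 * α)) := by
  obtain ⟨h⟩ := he.nonempty_basisProjections
  let ι := ratCombination e
  let u (i : ℕ) : ℕ →₀ ℚ := Finsupp.single i 1
  have hu : ι ∘ u = e := funext fun i => by simp [ι, u, ratCombination_single]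
  have hι : Function.Injective ι := ratCombination_injective h.linearIndependent
  by_cases hwin : ∀ x, BlockOf ℚ u x →
    ∃ K, WinsForBlock (‖ι ·‖) (fun _ _ : Unit => True) K () (⊥ : Position ℚ (ℕ →₀ ℚ)) x
  · exact .inl (exists_isMinimalSpace_of_winsForBlock (hu ▸ h) hι hwin)
  · push Not at hwin
    obtain ⟨x, hux, hlose⟩ := hwin
    obtain ⟨hx, -⟩ := (hu ▸ h).exists_of_blockOf (hux.map hι)
    obtain ⟨z, hxz, α, hα, hmin, htight⟩ :=
      exists_isAlphaMinimal_isAlphaTight_of_not_winsForBlock hx hι hlose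
    refine .inr ⟨ι ∘ z, isBlockSeq_iff_blockOf.2 (hu ▸ (hux.trans hxz).map hι), α, ?_, hmin, htight⟩
    rwa [Cardinal.ord_aleph]

end Rosendal
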